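/- arXiv:1210.2359 — 3 statements merged into one kernel-verified Lean document; each statement's English description precedes it below -/
import Mathlib

section
/- Let H be a 2×2 matrix-valued function which is analytic on ℂ ∖ X_N, whose second column is analytic at each node x_{N,k}, and whose first column has at most a simple pole at each node x_{N,k} with residue Res_{z=x_{N,k}} H(z) = lim_{z→x_{N,k}} H(z)·[[0, 0],[w_{N,k}^{−1} Π_{j≠k}(x_{N,k}−x_{N,j})^{−2}, 0]]. Define R(z) := H(z)·[[1, 0],[∓ i e^{±Nπiz} cos(Nπz)/(Nπ w(z) Π_{j=0}^{N−1}(z−x_{N,j})²), 1]] for z in domains Ω_± surrounding the interval (0,1) in the upper/lower half-plane respectively. Then for each node x_{N,k}, the singularity of R at x_{N,k} is removable, i.e. Res_{z=x_{N,k}} R(z) = 0 and every entry of R extends analytically across x_{N,k}. -/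
open Complex Real Filter Topology

/-!
Near a node `x` the first column of `R` is `H₀ + H₁ · q`, where `H₀`, `H₁` are the columns of `H` and
`q z = E z * cos (Nπz) * g z / (z - x)²`, with `E z = ∓i e^{±Nπiz}` and
`g z = (Nπ w(z) ∏_{j ≠ k} (z - x_j)²)⁻¹`. The arguments of the Gamma functions in `w` have positive
real part at a node, so `w` is analytic and nonzero there and `g` is analytic. Since `cos (Nπx) = 0`,
the pole of `q` at `x` is simple. Euler's formula gives `E x * sin (Nπx) = 1` for both signs, so the
residue of `q` is `-(w(x) ∏_{j ≠ k} (x - x_j)²)⁻¹`, and `H₁ · q` cancels the prescribed residue of `H₀`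
(`cancelled_pole_removable`). A function that is holomorphic on a punctured neighbourhood and satisfies
`(z - x) f(z) → 0` extends analytically (`exists_analyticAt_of_tendsto_sub_mul`). The second column of
`R` is that of `H`.
-/

/-- Riemann's removable singularity theorem, with the extension given by the difference quotient
at `x` of `z ↦ (z - x) * f z`, extended by `0`. -/
lemma exists_analyticAt_of_tendsto_sub_mul {f : ℂ → ℂ} {x : ℂ}
    (hd : ∀ᶠ z in 𝓝[≠] x, DifferentiableAt ℂ f z)
    (ht : Tendsto (fun z => (z - x) * f z) (𝓝[≠] x) (𝓝 0)) :
    ∃ g : ℂ → ℂ, AnalyticAt ℂ g x ∧ ∀ᶠ z in 𝓝[≠] x, f z = g z := by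
  classical
  set G : ℂ → ℂ := Function.update (fun z => (z - x) * f z) x 0 with hG
  have hGx : G x = 0 := by simp [hG]
  have hGz : ∀ z, z ≠ x → G z = (z - x) * f z := fun z hz => by simp [hG, hz]
  have hGa : AnalyticAt ℂ G x := by
    refine Complex.analyticAt_of_differentiable_on_punctured_nhds_of_continuousAt ?_
      (continuousAt_update_same.2 ht)
    filter_upwards [hd, self_mem_nhdsWithin] with z hz hzx
    have hmul : DifferentiableAt ℂ (fun z => (z - x) * f z) z := by fun_prop
    refine hmul.congr_of_eventuallyEq ?_
    filter_upwards [isOpen_ne.mem_nhds hzx] with y hy using hGz y hy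
  obtain ⟨p, hp⟩ := hGa
  refine ⟨dslope G x, ⟨_, hp.has_fpower_series_dslope_fslope⟩, ?_⟩
  filter_upwards [self_mem_nhdsWithin] with z hz
  have hzx : z - x ≠ 0 := sub_ne_zero.2 hz
  rw [dslope_of_ne _ hz, slope_def_field, hGx, hGz z hz, sub_zero, mul_div_cancel_left₀ _ hzx]

/-- If `h₁ → L` and `h₀` has residue `L * (c * g x)`, then adding
`h₁ z * (E z * cos (c z) * g z / (z - x)²)` to `h₀` removes the pole: the normalisation
`E x * sin (c x) = 1` makes the derivative of `E z * cos (c z) * g z` at its zero `x` equal to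
`-(c * g x)`. -/
lemma cancelled_pole_removable {E g h₀ h₁ r : ℂ → ℂ} {x L c : ℂ}
    (hE : AnalyticAt ℂ E x) (hg : AnalyticAt ℂ g x)
    (hcos : Complex.cos (c * x) = 0) (hEs : E x * Complex.sin (c * x) = 1)
    (hd₀ : ∀ᶠ z in 𝓝[≠] x, DifferentiableAt ℂ h₀ z)
    (hd₁ : ∀ᶠ z in 𝓝[≠] x, DifferentiableAt ℂ h₁ z)
    (ht₁ : Tendsto h₁ (𝓝[≠] x) (𝓝 L))
    (ht₀ : Tendsto (fun z => (z - x) * h₀ z) (𝓝[≠] x) (𝓝 (L * (c * g x))))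
    (hr : ∀ z, z ≠ x → r z = h₀ z + h₁ z * (E z * Complex.cos (c * z) * g z / (z - x) ^ 2)) :
    Tendsto (fun z => (z - x) * r z) (𝓝[≠] x) (𝓝 0) ∧
      ∃ e : ℂ → ℂ, AnalyticAt ℂ e x ∧ ∀ᶠ z in 𝓝[≠] x, r z = e z := by
  set F : ℂ → ℂ := fun z => E z * Complex.cos (c * z) * g z with hF
  have hFx : F x = 0 := by simp [hF, hcos]
  have hF' : HasDerivAt F (-(c * g x)) x := by
    have hcos' : HasDerivAt (fun z => Complex.cos (c * z)) (-Complex.sin (c * x) * (c * 1)) x :=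
      ((hasDerivAt_id x).const_mul c).ccos
    have h := (hE.differentiableAt.hasDerivAt.mul hcos').mul hg.differentiableAt.hasDerivAt
    refine h.congr_deriv ?_
    simp only [Pi.mul_apply, hcos]
    linear_combination (-(c * g x)) * hEs
  have hslope := hF'.tendsto_slope
  have ht : Tendsto (fun z => (z - x) * r z) (𝓝[≠] x) (𝓝 0) := by
    have h := ht₀.add (ht₁.mul hslope)
    rw [show L * (c * g x) + L * -(c * g x) = 0 by ring] at h
    refine h.congr' ?_
    filter_upwards [self_mem_nhdsWithin] with z hz
    have hz' : z - x ≠ 0 := sub_ne_zero.2 hz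
    rw [hr z hz, slope_def_field, hFx]
    simp only [hF]
    field_simp
    ring
  refine ⟨ht, exists_analyticAt_of_tendsto_sub_mul ?_ ht⟩
  have hFa : AnalyticAt ℂ F x := by
    have : AnalyticAt ℂ (fun z => Complex.cos (c * z)) x := by fun_prop
    exact (hE.mul this).mul hg
  filter_upwards [hd₀, hd₁, hFa.eventually_analyticAt.filter_mono nhdsWithin_le_nhds,
    self_mem_nhdsWithin] with z h0 h1 hFz hz
  have hz' : (z - x) ^ 2 ≠ 0 := pow_ne_zero _ (sub_ne_zero.2 hz)
  have hsum : DifferentiableAt ℂ (fun z => h₀ z + h₁ z * (F z / (z - x) ^ 2)) z :=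
    h0.add (h1.mul (hFz.differentiableAt.div (by fun_prop) hz'))
  refine hsum.congr_of_eventuallyEq ?_
  filter_upwards [isOpen_ne.mem_nhds hz] with y hy using hr y hy

lemma analyticAt_Gamma_of_re_pos {s : ℂ} (hs : 0 < s.re) : AnalyticAt ℂ Complex.Gamma s := by
  rw [Complex.analyticAt_iff_eventually_differentiableAt]
  filter_upwards [(isOpen_lt continuous_const Complex.continuous_re).mem_nhds hs] with z hz
  refine Complex.differentiableAt_Gamma z fun m hm => ?_
  have hz' : 0 < z.re := hz
  rw [hm] at hz'
  simp only [neg_re, natCast_re] at hz'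
  linarith [(Nat.cast_nonneg m : (0 : ℝ) ≤ m)]

/-- At a node the Gamma arguments in the weight are `k + 1 + α`, `N - k + β`, `k + 1` and `N - k`,
all positive. -/
lemma weight_analyticAt_ne_zero {N k : ℕ} (hk : k < N) {α β : ℝ} (hα : -1 < α) (hβ : -1 < β)
    {x : ℝ} (hx : x = ((k : ℝ) + 1 / 2) / N) {w : ℂ → ℂ}
    (hw : ∀ z, w z = (N:ℂ) ^ (-(α:ℂ) - (β:ℂ)) *
        (Complex.Gamma ((N:ℂ)*z + (α:ℂ) + 1/2) * Complex.Gamma ((N:ℂ)*(1 - z) + (β:ℂ) + 1/2)) /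
        (Complex.Gamma ((N:ℂ)*z + 1/2) * Complex.Gamma ((N:ℂ)*(1 - z) + 1/2))) :
    AnalyticAt ℂ w (x : ℂ) ∧ w (x : ℂ) ≠ 0 := by
  have hN : (N : ℂ) ≠ 0 := by exact_mod_cast (by omega : N ≠ 0)
  have hNx : (N : ℂ) * (x : ℂ) = (k : ℂ) + 1 / 2 := by
    rw [hx]; push_cast; field_simp
  have hkN : (k : ℝ) + 1 ≤ N := by exact_mod_cast hk
  have hk0 : (0 : ℝ) ≤ k := Nat.cast_nonneg k
  have e1 : 0 < ((N:ℂ)*x + (α:ℂ) + 1/2).re := by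
    rw [hNx, show (k : ℂ) + 1/2 + (α:ℂ) + 1/2 = ((k + 1 + α : ℝ) : ℂ) by push_cast; ring, ofReal_re]
    linarith
  have e2 : 0 < ((N:ℂ)*(1 - x) + (β:ℂ) + 1/2).re := by
    rw [mul_sub, hNx, show (N : ℂ) * 1 - (k + 1/2) + (β:ℂ) + 1/2 = ((N - k + β : ℝ) : ℂ) by
      push_cast; ring, ofReal_re]
    linarith
  have e3 : 0 < ((N:ℂ)*x + 1/2).re := by
    rw [hNx, show (k : ℂ) + 1/2 + 1/2 = ((k + 1 : ℝ) : ℂ) by push_cast; ring, ofReal_re]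
    linarith
  have e4 : 0 < ((N:ℂ)*(1 - x) + 1/2).re := by
    rw [mul_sub, hNx, show (N : ℂ) * 1 - (k + 1/2) + 1/2 = ((N - k : ℝ) : ℂ) by
      push_cast; ring, ofReal_re]
    linarith
  have n1 := Complex.Gamma_ne_zero_of_re_pos e1
  have n2 := Complex.Gamma_ne_zero_of_re_pos e2
  have n3 := Complex.Gamma_ne_zero_of_re_pos e3
  have n4 := Complex.Gamma_ne_zero_of_re_pos e4
  constructor
  · rw [show w = _ from funext hw]
    have a1 : AnalyticAt ℂ (fun z : ℂ => Complex.Gamma ((N:ℂ)*z + (α:ℂ) + 1/2)) x :=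
      (analyticAt_Gamma_of_re_pos e1).fun_comp (f := fun z : ℂ => (N:ℂ)*z + (α:ℂ) + 1/2) (by fun_prop)
    have a2 : AnalyticAt ℂ (fun z : ℂ => Complex.Gamma ((N:ℂ)*(1 - z) + (β:ℂ) + 1/2)) x :=
      (analyticAt_Gamma_of_re_pos e2).fun_comp (f := fun z : ℂ => (N:ℂ)*(1 - z) + (β:ℂ) + 1/2)
        (by fun_prop)
    have a3 : AnalyticAt ℂ (fun z : ℂ => Complex.Gamma ((N:ℂ)*z + 1/2)) x :=
      (analyticAt_Gamma_of_re_pos e3).fun_comp (f := fun z : ℂ => (N:ℂ)*z + 1/2) (by fun_prop)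
    have a4 : AnalyticAt ℂ (fun z : ℂ => Complex.Gamma ((N:ℂ)*(1 - z) + 1/2)) x :=
      (analyticAt_Gamma_of_re_pos e4).fun_comp (f := fun z : ℂ => (N:ℂ)*(1 - z) + 1/2) (by fun_prop)
    exact (analyticAt_const.mul (a1.mul a2)).div (a3.mul a4) (mul_ne_zero n3 n4)
  · rw [hw]
    exact div_ne_zero (mul_ne_zero (by simp [Complex.cpow_eq_zero_iff, hN]) (mul_ne_zero n1 n2))
      (mul_ne_zero n3 n4)

/-- Lemma 3.1: given `H` analytic off the nodes, with analytic second
column and first-column simple poles with residue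
`Res_{z=x_{N,k}} H = lim_{z→x_{N,k}} H(z)·[[0,0],[w_{N,k}^{−1}Π_{j≠k}(x_{N,k}−x_{N,j})^{−2},0]]`,
the functions `R(z) = H(z)·[[1,0],[∓ie^{±Nπiz}cos(Nπz)/(Nπ w(z)Π_j(z−x_{N,j})²),1]]`
(upper/lower sign) have removable singularities at every node: the residue is `0` and every
entry extends analytically across the node. -/
theorem R_removable_singularities
    (n N : ℕ) (hn : 0 < n) (hnN : n < N)
    (α β : ℝ) (hα : -1 < α) (hβ : -1 < β)
    (node : ℕ → ℝ) (hnode : ∀ k, node k = ((k:ℝ) + 1/2) / N)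
    (w : ℂ → ℂ)
    (hw : ∀ z, w z = (N:ℂ) ^ (-(α:ℂ) - (β:ℂ)) *
        (Complex.Gamma ((N:ℂ)*z + (α:ℂ) + 1/2) * Complex.Gamma ((N:ℂ)*(1 - z) + (β:ℂ) + 1/2)) /
        (Complex.Gamma ((N:ℂ)*z + 1/2) * Complex.Gamma ((N:ℂ)*(1 - z) + 1/2)))
    (H : ℂ → Matrix (Fin 2) (Fin 2) ℂ)
    -- (H_a): H is analytic off the nodes
    (hHa : ∀ i j : Fin 2, AnalyticOnNhd ℂ (fun z => H z i j)
        {z : ℂ | ∀ k < N, z ≠ ((node k : ℝ) : ℂ)})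
    -- (H_b): the second column of H is analytic at each node
    (hHsecond : ∀ k < N, ∀ i : Fin 2, ∃ gk : ℂ → ℂ,
        AnalyticAt ℂ gk ((node k : ℝ) : ℂ) ∧
        ∀ᶠ z in 𝓝[≠] ((node k : ℝ) : ℂ), H z i 1 = gk z)
    -- (H_b): the first column of H has a simple pole at each node with the stated residue
    (hHfirst : ∀ k < N, ∀ i : Fin 2, ∃ L : ℂ,
        Tendsto (fun z => H z i 1) (𝓝[≠] ((node k : ℝ) : ℂ)) (𝓝 L) ∧
        Tendsto (fun z => (z - ((node k : ℝ) : ℂ)) * H z i 0)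
          (𝓝[≠] ((node k : ℝ) : ℂ))
          (𝓝 (L * ((w ((node k : ℝ) : ℂ))⁻¹ *
            (∏ j ∈ (Finset.range N).erase k,
              (((node k : ℝ) : ℂ) - ((node j : ℝ) : ℂ))^2)⁻¹))))
    (Rp Rm : ℂ → Matrix (Fin 2) (Fin 2) ℂ)
    (hRp : ∀ z, Rp z = H z *
      !![1, 0;
         -Complex.I * Complex.exp ((N:ℂ) * (Real.pi : ℂ) * Complex.I * z) *
             Complex.cos ((N:ℂ) * (Real.pi : ℂ) * z) /
           ((N:ℂ) * (Real.pi : ℂ) * w z *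
             (∏ j ∈ Finset.range N, (z - ((node j : ℝ) : ℂ))^2)), 1])
    (hRm : ∀ z, Rm z = H z *
      !![1, 0;
         Complex.I * Complex.exp (-((N:ℂ) * (Real.pi : ℂ) * Complex.I * z)) *
             Complex.cos ((N:ℂ) * (Real.pi : ℂ) * z) /
           ((N:ℂ) * (Real.pi : ℂ) * w z *
             (∏ j ∈ Finset.range N, (z - ((node j : ℝ) : ℂ))^2)), 1]) :
    ∀ k < N, ∀ i j : Fin 2,
      (Tendsto (fun z => (z - ((node k : ℝ) : ℂ)) * Rp z i j)
          (𝓝[≠] ((node k : ℝ) : ℂ)) (𝓝 0) ∧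
        ∃ gk : ℂ → ℂ, AnalyticAt ℂ gk ((node k : ℝ) : ℂ) ∧
          ∀ᶠ z in 𝓝[≠] ((node k : ℝ) : ℂ), Rp z i j = gk z) ∧
      (Tendsto (fun z => (z - ((node k : ℝ) : ℂ)) * Rm z i j)
          (𝓝[≠] ((node k : ℝ) : ℂ)) (𝓝 0) ∧
        ∃ gk : ℂ → ℂ, AnalyticAt ℂ gk ((node k : ℝ) : ℂ) ∧
          ∀ᶠ z in 𝓝[≠] ((node k : ℝ) : ℂ), Rm z i j = gk z) := by
  intro k hk i j
  have hNpos : 0 < N := by omega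
  have hN : (N : ℂ) ≠ 0 := by exact_mod_cast hNpos.ne'
  have hNR : (N : ℝ) ≠ 0 := by exact_mod_cast hNpos.ne'
  have hπ : (Real.pi : ℂ) ≠ 0 := by exact_mod_cast Real.pi_ne_zero
  have hinj : ∀ l m, node l = node m → l = m := by
    intro l m h
    rw [hnode, hnode, div_left_inj' hNR] at h
    exact_mod_cast add_right_cancel h
  obtain ⟨hwa, hw0⟩ := weight_analyticAt_ne_zero hk hα hβ (hnode k) hw
  have hNx : (N : ℂ) * ((node k : ℝ) : ℂ) = (k : ℂ) + 1 / 2 := by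
    rw [hnode]; push_cast; field_simp
  set x : ℂ := ((node k : ℝ) : ℂ) with hx
  have hcos : Complex.cos ((N : ℂ) * (Real.pi : ℂ) * x) = 0 := by
    rw [Complex.cos_eq_zero_iff]
    refine ⟨k, ?_⟩
    push_cast
    linear_combination (Real.pi : ℂ) * hNx
  have hsin : Complex.sin ((N : ℂ) * (Real.pi : ℂ) * x) ^ 2 = 1 := by
    have h := Complex.sin_sq_add_cos_sq ((N : ℂ) * (Real.pi : ℂ) * x)
    rw [hcos] at h
    linear_combination h
  have hnear : ∀ᶠ z in 𝓝[≠] x, ∀ l < N, z ≠ ((node l : ℝ) : ℂ) := by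
    have hl : ∀ l ∈ Finset.range N, ∀ᶠ z in 𝓝[≠] x, z ≠ ((node l : ℝ) : ℂ) := by
      intro l _
      by_cases hlk : l = k
      · subst hlk; exact self_mem_nhdsWithin
      · refine nhdsWithin_le_nhds (isOpen_ne.mem_nhds ?_)
        intro h
        exact hlk (hinj _ _ (Complex.ofReal_injective h)).symm
    filter_upwards [(Finset.eventually_all _).2 hl] with z hz l hlN
    exact hz l (Finset.mem_range.2 hlN)
  have hd : ∀ i j, ∀ᶠ z in 𝓝[≠] x, DifferentiableAt ℂ (fun z => H z i j) z := by
    intro i j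
    filter_upwards [hnear] with z hz using (hHa i j z hz).differentiableAt
  obtain ⟨L, ht₁, ht₀⟩ := hHfirst k hk i
  set P : ℂ → ℂ := fun z => ∏ j ∈ (Finset.range N).erase k, (z - ((node j : ℝ) : ℂ)) ^ 2 with hP
  have hPa : AnalyticAt ℂ P x :=
    Finset.analyticAt_fun_prod _ fun j _ => (analyticAt_id.sub analyticAt_const).pow 2
  have hP0 : P x ≠ 0 := by
    refine Finset.prod_ne_zero_iff.2 fun j hj => pow_ne_zero _ (sub_ne_zero.2 fun h => ?_)
    exact (Finset.mem_erase.1 hj).1 (hinj _ _ (Complex.ofReal_injective h)).symm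
  have hprod : ∀ z, ∏ j ∈ Finset.range N, (z - ((node j : ℝ) : ℂ)) ^ 2 = (z - x) ^ 2 * P z :=
    fun z => (Finset.mul_prod_erase _ _ (Finset.mem_range.2 hk)).symm
  set g : ℂ → ℂ := fun z => ((N : ℂ) * (Real.pi : ℂ) * w z * P z)⁻¹ with hg
  have hga : AnalyticAt ℂ g x :=
    ((analyticAt_const.mul hwa).mul hPa).inv
      (mul_ne_zero (mul_ne_zero (mul_ne_zero hN hπ) hw0) hP0)
  have hcg : (N : ℂ) * (Real.pi : ℂ) * g x = (w x)⁻¹ * (P x)⁻¹ := by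
    simp only [hg]; field_simp
  have ht₀' : Tendsto (fun z => (z - x) * H z i 0) (𝓝[≠] x)
      (𝓝 (L * ((N : ℂ) * (Real.pi : ℂ) * g x))) := by
    rw [hcg]; exact ht₀
  -- Only the exponential prefactor `E` in the lower-left entry depends on the sign.
  have key : ∀ (E : ℂ → ℂ) (R : ℂ → Matrix (Fin 2) (Fin 2) ℂ), AnalyticAt ℂ E x →
      E x * Complex.sin ((N : ℂ) * (Real.pi : ℂ) * x) = 1 →
      (∀ z, R z = H z * !![1, 0; E z * Complex.cos ((N:ℂ) * (Real.pi : ℂ) * z) /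
           ((N:ℂ) * (Real.pi : ℂ) * w z *
             (∏ j ∈ Finset.range N, (z - ((node j : ℝ) : ℂ))^2)), 1]) →
      Tendsto (fun z => (z - x) * R z i j) (𝓝[≠] x) (𝓝 0) ∧
        ∃ gk : ℂ → ℂ, AnalyticAt ℂ gk x ∧ ∀ᶠ z in 𝓝[≠] x, R z i j = gk z := by
    intro E R hE hEs hR
    fin_cases j
    · refine cancelled_pole_removable hE hga hcos hEs (hd i 0) (hd i 1) ht₁ ht₀' fun z _ => ?_
      rw [hR, hprod]
      simp only [Matrix.mul_apply, Fin.sum_univ_two, hg]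
      simp
      left
      simp only [div_eq_mul_inv, mul_inv]
      ring
    · have hcol : ∀ z, R z i 1 = H z i 1 := by
        intro z
        rw [hR]
        simp [Matrix.mul_apply, Fin.sum_univ_two]
      have hsub : Tendsto (fun z : ℂ => z - x) (𝓝[≠] x) (𝓝 0) := by
        have : Tendsto (fun z : ℂ => z - x) (𝓝 x) (𝓝 (x - x)) :=
          (continuous_id.sub continuous_const).tendsto x
        rw [sub_self] at this
        exact this.mono_left nhdsWithin_le_nhds
      have ht := hsub.mul ht₁
      rw [zero_mul] at ht
      simp only [Fin.mk_one, hcol]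
      exact ⟨ht, hHsecond k hk i⟩
  have harg : (N : ℂ) * (Real.pi : ℂ) * Complex.I * x = (N : ℂ) * (Real.pi : ℂ) * x * Complex.I := by
    ring
  constructor
  · refine key (fun z => -Complex.I * Complex.exp ((N:ℂ) * (Real.pi : ℂ) * Complex.I * z)) Rp
      (by fun_prop) ?_ hRp
    simp only [harg, Complex.exp_mul_I, hcos]
    linear_combination hsin - Complex.sin ((N : ℂ) * (Real.pi : ℂ) * x) ^ 2 * Complex.I_sq
  · refine key (fun z => Complex.I * Complex.exp (-((N:ℂ) * (Real.pi : ℂ) * Complex.I * z))) Rm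
      (by fun_prop) ?_ hRm
    simp only [harg, ← neg_mul ((N : ℂ) * (Real.pi : ℂ) * x), Complex.exp_mul_I, Complex.cos_neg, Complex.sin_neg, hcos]
    linear_combination hsin - Complex.sin ((N : ℂ) * (Real.pi : ℂ) * x) ^ 2 * Complex.I_sq
end

section
/- The function φ̃ has the following mapping properties (boundary values f_±(x) := lim_{ε→0⁺} f(x ± iε)): (i) for x ∈ (−∞,0): Re φ̃_±(x) < φ̃(0) and Im φ̃_±(x) = ∓πx/c; (ii) for x ∈ [0,a): φ̃(x) is real and φ̃(x) < 0; (iii) φ̃(a) = 0 and φ̃_±(b) = ±(1 − 1/c)πi; (iv) for x ∈ (a,b): Re φ̃_±(x) = 0 and arg φ̃_±(x) = ∓π/2; (v) for x ∈ (b,1]: Re φ̃_±(x) < 0 and Im φ̃_±(x) = ±(1 − 1/c)π; (vi) for x ∈ (1,+∞): Re φ̃_±(x) < Re φ̃_±(1) and Im φ̃_±(x) = ±(1 − x/c)π. -/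
open Complex Real Filter Topology Set

/-!
Write `R(z) = ((z-a)(z-b))^{1/2}`, so that `R² = z² - z + c²/4` and
`(c/2 - R)(c/2 + R) = z(1-z)`. Everything follows from the boundary values of `ν` on the upper
side of the real axis, where `s = |R|`:

* `x < 0`: `ν₊` has positive real part and imaginary part `-π/c`;
* `a < x < b`: `ν₊ = -(2i/c) arctan(2s/c)`;
* `b < x < 1`: `ν₊` is negative;
* `x > 1`: `ν₊` has negative real part and imaginary part `-π/c`.

The signs come from comparing `(c/2 ± s)²` with `|c²/4 - s²| = |x(1-x)|`. On `(0,a)` the function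
`ν` itself is real and positive, which gives (ii).

Since `ν` has at most logarithmic singularities (`nuFun_bound`), dominated convergence along
horizontal segments shows that increments of `φ̃₊` are integrals of `ν₊` (`boundary_ftc`). The
value at `b` is the period integral `∫_a^b arctan(2s/c) = (π/2)(1-c)`, which has an elementary
antiderivative (`integral_arctan`). The lower side reduces to the upper one: `conj (φ̃ (conj z))` is
again a primitive of `ν` on the upper half-plane (`nuFun_conj`).
-/

/-! ### The square root and its boundary values -/

/-- The square root `((z-a)(z-b))^{1/2}`, as a product of two principal square roots. -/
noncomputable def sqrtR (a b : ℝ) (z : ℂ) : ℂ :=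
  (z - (a:ℂ)) ^ ((1:ℂ)/2) * (z - (b:ℂ)) ^ ((1:ℂ)/2)

/-- The density `ν` in explicit form. -/
noncomputable def nuFun (c a b : ℝ) (z : ℂ) : ℂ :=
  (2/(c:ℂ)) * Complex.log ((c:ℂ)/2 - sqrtR a b z) - (1/(c:ℂ)) * Complex.log (z - z ^ 2)

lemma half_pos_of_im_pos {z : ℂ} (hz : 0 < z.im) :
    0 < (z ^ ((1:ℂ)/2)).re ∧ 0 < (z ^ ((1:ℂ)/2)).im := by
  have hz0 : z ≠ 0 := by rintro rfl; simp at hz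
  have harg1 : 0 < z.arg := by
    have h1 := Complex.arg_nonneg_iff.2 hz.le
    rcases h1.lt_or_eq with h | h
    · exact h
    · exact absurd (Complex.arg_eq_zero_iff.1 h.symm).2 hz.ne'
  have harg2 := Complex.arg_le_pi z
  have hre : (Complex.log z * (1/2)).im = z.arg / 2 := by
    rw [show (1/2:ℂ) = ((1/2:ℝ):ℂ) by push_cast; rfl, Complex.im_mul_ofReal, Complex.log_im]; ring
  rw [Complex.cpow_def_of_ne_zero hz0, Complex.exp_re, Complex.exp_im, hre]
  have hlt : z.arg < Real.pi := by
    rcases harg2.lt_or_eq with h | h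
    · exact h
    · exact absurd (Complex.arg_eq_pi_iff.1 h).2 hz.ne'
  constructor
  · exact mul_pos (Real.exp_pos _) (Real.cos_pos_of_mem_Ioo ⟨by linarith, by linarith⟩)
  · exact mul_pos (Real.exp_pos _) (Real.sin_pos_of_pos_of_lt_pi (by linarith) (by linarith))

lemma sqrtR_im_pos (a b : ℝ) {z : ℂ} (hz : 0 < z.im) : 0 < (sqrtR a b z).im := by
  have h1 := half_pos_of_im_pos (z := z - a) (by simpa using hz)
  have h2 := half_pos_of_im_pos (z := z - b) (by simpa using hz)
  rw [sqrtR, Complex.mul_im]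
  have := mul_pos h1.1 h2.2
  have := mul_pos h1.2 h2.1
  linarith

lemma half_sq (z : ℂ) : (z ^ ((1:ℂ)/2)) ^ 2 = z := by

  simp [one_div]

lemma sqrtR_sq {c a b : ℝ} (h1 : a + b = 1) (h2 : a * b = c ^ 2 / 4) (z : ℂ) :
    sqrtR a b z ^ 2 = z ^ 2 - z + (c:ℂ) ^ 2 / 4 := by
  have h1' : (a:ℂ) + b = 1 := by exact_mod_cast h1
  have h2' : (a:ℂ) * b = (c:ℂ) ^ 2 / 4 := by exact_mod_cast h2
  rw [sqrtR, mul_pow, half_sq, half_sq]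
  linear_combination (-z) * h1' + h2'

lemma half_ofReal {x : ℝ} (hx : 0 ≤ x) : ((x:ℂ)) ^ ((1:ℂ)/2) = ((Real.sqrt x : ℝ):ℂ) := by
  rw [Real.sqrt_eq_rpow, Complex.ofReal_cpow hx]; push_cast; rfl

lemma half_ofReal_neg {x : ℝ} (hx : x ≤ 0) :
    ((x:ℂ)) ^ ((1:ℂ)/2) = ((Real.sqrt (-x) : ℝ):ℂ) * Complex.I := by
  rw [Complex.ofReal_cpow_of_nonpos hx, ← Complex.ofReal_neg, half_ofReal (by linarith)]
  congr 1
  rw [show (Real.pi:ℂ) * Complex.I * (1/2) = (Real.pi:ℂ) / 2 * Complex.I by ring,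
    Complex.exp_pi_div_two_mul_I]

lemma sqrtR_right {a b t : ℝ} (hab : a < b) (ht : b < t) :
    sqrtR a b (t:ℂ) = ((Real.sqrt ((t - a) * (t - b)) : ℝ) : ℂ) := by
  rw [sqrtR, ← Complex.ofReal_sub, ← Complex.ofReal_sub, half_ofReal (by linarith),
    half_ofReal (by linarith), Real.sqrt_mul (by linarith)]
  push_cast; rfl

lemma sqrtR_mid {a b t : ℝ} (hat : a < t) (ht : t < b) :
    sqrtR a b (t:ℂ) = ((Real.sqrt ((t - a) * (b - t)) : ℝ) : ℂ) * Complex.I := by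
  rw [sqrtR, ← Complex.ofReal_sub, ← Complex.ofReal_sub, half_ofReal (by linarith),
    half_ofReal_neg (by linarith), Real.sqrt_mul (by linarith), neg_sub]
  push_cast; ring

lemma sqrtR_left {a b t : ℝ} (hab : a < b) (ht : t < a) :
    sqrtR a b (t:ℂ) = ((-Real.sqrt ((a - t) * (b - t)) : ℝ) : ℂ) := by
  rw [sqrtR, ← Complex.ofReal_sub, ← Complex.ofReal_sub, half_ofReal_neg (by linarith),
    half_ofReal_neg (by linarith), Real.sqrt_mul (by linarith), neg_sub, neg_sub]
  push_cast
  linear_combination ((Real.sqrt (a - t) : ℝ) : ℂ) * ((Real.sqrt (b - t) : ℝ) : ℂ) * Complex.I_sq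

lemma tendsto_vert (t : ℝ) :
    Tendsto (fun ε : ℝ => (t:ℂ) + ε * Complex.I) (𝓝[>] 0) (𝓝 (t:ℂ)) := by
  have : Continuous (fun ε : ℝ => (t:ℂ) + ε * Complex.I) := by fun_prop
  have h := (this.tendsto 0).mono_left (nhdsWithin_le_nhds (s := Ioi 0))
  simpa using h

lemma half_tendsto {t : ℝ} (ht : t ≠ 0) :
    Tendsto (fun ε : ℝ => ((t:ℂ) + ε * Complex.I) ^ ((1:ℂ)/2)) (𝓝[>] 0)
      (𝓝 ((t:ℂ) ^ ((1:ℂ)/2))) := by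
  rcases lt_or_gt_of_ne ht with h | h
  · have hl := Complex.continuousWithinAt_log_of_re_neg_of_im_zero (z := (t:ℂ))
      (by simpa using h) (by simp)
    have hv : Tendsto (fun ε : ℝ => (t:ℂ) + ε * Complex.I) (𝓝[>] 0)
        (𝓝[{z : ℂ | 0 ≤ z.im}] (t:ℂ)) := by
      refine tendsto_nhdsWithin_iff.2 ⟨tendsto_vert t, ?_⟩
      filter_upwards [self_mem_nhdsWithin] with ε hε
      simpa using le_of_lt hε
    have h2 := (Complex.continuous_exp.tendsto _).comp
      ((Tendsto.comp hl hv).mul_const ((1:ℂ)/2))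
    have h0 : (t:ℂ) ≠ 0 := by exact_mod_cast ht
    rw [Complex.cpow_def_of_ne_zero h0]
    refine h2.congr' ?_
    filter_upwards [self_mem_nhdsWithin] with ε hε
    have h0 : (t:ℂ) + ε * Complex.I ≠ 0 := by
      intro h'
      have := congrArg Complex.im h'
      simp at this
      exact (ne_of_gt (show (0:ℝ) < ε from hε)) this
    rw [Complex.cpow_def_of_ne_zero h0]; rfl
  · have : ContinuousAt (fun z : ℂ => z ^ ((1:ℂ)/2)) (t:ℂ) :=
      (continuousAt_cpow_const (Complex.ofReal_mem_slitPlane.2 h))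
    exact Tendsto.comp this (tendsto_vert t)

lemma sqrtR_tendsto {a b t : ℝ} (h1 : t ≠ a) (h2 : t ≠ b) :
    Tendsto (fun ε : ℝ => sqrtR a b ((t:ℂ) + ε * Complex.I)) (𝓝[>] 0) (𝓝 (sqrtR a b t)) := by
  have e1 := half_tendsto (sub_ne_zero.2 h1)
  have e2 := half_tendsto (sub_ne_zero.2 h2)
  have := e1.mul e2
  simp only [sqrtR]
  push_cast at this
  convert this using 2 with ε
  ring_nf

lemma sub_sq_tendsto (t : ℝ) :
    Tendsto (fun ε : ℝ => ((t:ℂ) + ε * Complex.I) - ((t:ℂ) + ε * Complex.I) ^ 2) (𝓝[>] 0)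
      (𝓝 (((t - t ^ 2 : ℝ)) : ℂ)) := by
  have := (tendsto_vert t).sub ((tendsto_vert t).pow 2)
  push_cast; exact this

/-! ### Boundary limits of the logarithm -/

lemma log_tendsto_above {f : ℝ → ℂ} {x : ℝ} (hx : x < 0) (hf : Tendsto f (𝓝[>] 0) (𝓝 (x:ℂ)))
    (him : ∀ᶠ ε in 𝓝[>] 0, 0 < (f ε).im) :
    Tendsto (fun ε => Complex.log (f ε)) (𝓝[>] 0)
      (𝓝 ((Real.log (-x) : ℝ) + Real.pi * Complex.I)) := by
  have hl := Complex.tendsto_log_nhdsWithin_im_nonneg_of_re_neg_of_im_zero (z := (x:ℂ))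
      (by simpa using hx) (by simp)
  have hn : ‖(x:ℂ)‖ = -x := by simp [abs_of_neg hx]
  rw [hn] at hl
  refine hl.comp (tendsto_nhdsWithin_iff.2 ⟨hf, ?_⟩)
  filter_upwards [him] with ε h using h.le

lemma log_tendsto_below {f : ℝ → ℂ} {x : ℝ} (hx : x < 0) (hf : Tendsto f (𝓝[>] 0) (𝓝 (x:ℂ)))
    (him : ∀ᶠ ε in 𝓝[>] 0, (f ε).im < 0) :
    Tendsto (fun ε => Complex.log (f ε)) (𝓝[>] 0)
      (𝓝 ((Real.log (-x) : ℝ) - Real.pi * Complex.I)) := by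
  have hl := Complex.tendsto_log_nhdsWithin_im_neg_of_re_neg_of_im_zero (z := (x:ℂ))
      (by simpa using hx) (by simp)
  have hn : ‖(x:ℂ)‖ = -x := by simp [abs_of_neg hx]
  rw [hn] at hl
  exact hl.comp (tendsto_nhdsWithin_iff.2 ⟨hf, him⟩)

lemma log_tendsto_pos {f : ℝ → ℂ} {x : ℝ} (hx : 0 < x) (hf : Tendsto f (𝓝[>] 0) (𝓝 (x:ℂ))) :
    Tendsto (fun ε => Complex.log (f ε)) (𝓝[>] 0) (𝓝 ((Real.log x : ℝ) : ℂ)) := by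
  rw [Complex.ofReal_log hx.le]
  exact hf.clog (Complex.ofReal_mem_slitPlane.2 hx)

lemma im_vert_sub_sq (t ε : ℝ) :
    (((t:ℂ) + ε * Complex.I) - ((t:ℂ) + ε * Complex.I) ^ 2).im = ε * (1 - 2 * t) := by
  simp [pow_two]; ring

/-! ### Domination of the density and the boundary fundamental theorem -/

lemma norm_log_le_aux (w : ℂ) : ‖Complex.log w‖ ≤ |Real.log ‖w‖| + Real.pi := by
  have h := Complex.norm_le_abs_re_add_abs_im (Complex.log w)
  rw [Complex.log_re, Complex.log_im] at h
  have := Complex.abs_arg_le_pi w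
  linarith

lemma abs_log_norm_le {z : ℂ} {s : ℝ} (hs : s ≠ 0) (h : |s| ≤ ‖z‖) :
    |Real.log ‖z‖| ≤ |Real.log s| + ‖z‖ := by
  have hz : 0 < ‖z‖ := lt_of_lt_of_le (abs_pos.2 hs) h
  have h1 := Real.log_le_log (abs_pos.2 hs) h
  rw [Real.log_abs] at h1
  have h2 := Real.log_le_sub_one_of_pos hz
  have := neg_abs_le (Real.log s)
  have := abs_nonneg (Real.log s)
  rw [abs_le]; constructor <;> linarith

/-- A bound for `ν` near the real axis by a locally integrable function of the real part; it uses
`(c/2 - R)(c/2 + R) = z(1-z)` to keep `c/2 - R` away from `0`. -/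
lemma nuFun_bound {c a b : ℝ} (hc : 0 < c) (hc1 : c < 1) (ha : 0 < a) (hb : b < 1) (hab : a < b)
    (h1 : a + b = 1) (h2 : a * b = c ^ 2 / 4) {t ε : ℝ} (ht0 : t ≠ 0) (ht1 : t ≠ 1)
    (hε : 0 < ε) (hε1 : ε < 1) :
    ‖nuFun c a b ((t:ℂ) + ε * Complex.I)‖ ≤
      (1/c) * (3 * (|Real.log t| + |Real.log (1 - t)| + 2 * |t| + 3) + 2 * (|t| + 3)
        + 3 * Real.pi) := by
  set z : ℂ := (t:ℂ) + ε * Complex.I with hz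
  have hzre : z.re = t := by simp [hz]
  have hznorm : ‖z‖ ≤ |t| + 1 := by
    refine (norm_add_le _ _).trans ?_
    simp [abs_of_pos hε]; linarith
  have htz : |t| ≤ ‖z‖ := by rw [← hzre]; exact Complex.abs_re_le_norm z
  have htz1 : |1 - t| ≤ ‖1 - z‖ := by
    have := Complex.abs_re_le_norm (1 - z); simpa [hzre] using this
  have hz1 : ‖1 - z‖ ≤ 1 + ‖z‖ := by simpa using norm_sub_le (1:ℂ) z
  have ht1' : 1 - t ≠ 0 := sub_ne_zero.2 (Ne.symm ht1)
  have hL0 := abs_log_norm_le ht0 htz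
  have hL1 := abs_log_norm_le ht1' htz1
  have hzpos : 0 < ‖z‖ := lt_of_lt_of_le (abs_pos.2 ht0) htz
  have hz1pos : 0 < ‖1 - z‖ := lt_of_lt_of_le (abs_pos.2 ht1') htz1
  have hR : ‖sqrtR a b z‖ ≤ ‖z‖ + 1 := by
    have hsq : ‖sqrtR a b z‖ ^ 2 ≤ (‖z‖ + 1) ^ 2 := by
      rw [← norm_pow, sqrtR, mul_pow, half_sq, half_sq, norm_mul, pow_two]
      have e1 : ‖z - a‖ ≤ ‖z‖ + 1 := (norm_sub_le _ _).trans (by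
        simp only [Complex.norm_real, Real.norm_eq_abs, abs_of_pos ha]; linarith)
      have e2 : ‖z - b‖ ≤ ‖z‖ + 1 := (norm_sub_le _ _).trans (by
        simp only [Complex.norm_real, Real.norm_eq_abs, abs_of_pos (ha.trans hab)]; linarith)
      exact mul_le_mul e1 e2 (norm_nonneg _) (by positivity)
    exact le_of_sq_le_sq hsq (by positivity)
  have hc2 : ‖(c:ℂ)/2‖ ≤ 1 := by
    rw [norm_div, Complex.norm_real, Real.norm_eq_abs, abs_of_pos hc]; norm_num; linarith
  have hm : ‖(c:ℂ)/2 - sqrtR a b z‖ ≤ ‖z‖ + 2 := (norm_sub_le _ _).trans (by linarith)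
  have hp : ‖(c:ℂ)/2 + sqrtR a b z‖ ≤ ‖z‖ + 2 := (norm_add_le _ _).trans (by linarith)
  have hprod : ‖(c:ℂ)/2 - sqrtR a b z‖ * ‖(c:ℂ)/2 + sqrtR a b z‖ = ‖z‖ * ‖1 - z‖ := by
    rw [← norm_mul, ← norm_mul]; congr 1
    linear_combination -(sqrtR_sq h1 h2 z)
  have hzz : z - z ^ 2 = z * (1 - z) := by ring
  have hmpos : 0 < ‖(c:ℂ)/2 - sqrtR a b z‖ := by
    have := mul_pos hzpos hz1pos
    rw [← hprod] at this
    exact pos_of_mul_pos_left this (norm_nonneg _)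
  have hppos : 0 < ‖(c:ℂ)/2 + sqrtR a b z‖ := by
    have := mul_pos hzpos hz1pos
    rw [← hprod] at this
    exact pos_of_mul_pos_right this (norm_nonneg _)
  have hlog := congrArg Real.log hprod
  rw [Real.log_mul hmpos.ne' hppos.ne', Real.log_mul hzpos.ne' hz1pos.ne'] at hlog
  have hlm := Real.log_le_sub_one_of_pos hmpos
  have hlp := Real.log_le_sub_one_of_pos hppos
  have hw : |Real.log ‖(c:ℂ)/2 - sqrtR a b z‖| ≤
      |Real.log ‖z‖| + |Real.log ‖1 - z‖| + (‖z‖ + 2) := by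
    have := neg_abs_le (Real.log ‖z‖)
    have := neg_abs_le (Real.log ‖1 - z‖)
    have := abs_nonneg (Real.log ‖z‖)
    have := abs_nonneg (Real.log ‖1 - z‖)
    rw [abs_le]; constructor <;> linarith
  have hw2 : |Real.log ‖z - z ^ 2‖| ≤ |Real.log ‖z‖| + |Real.log ‖1 - z‖| := by
    rw [hzz, norm_mul, Real.log_mul hzpos.ne' hz1pos.ne']; exact abs_add_le _ _
  have g1 := norm_log_le_aux ((c:ℂ)/2 - sqrtR a b z)
  have g2 := norm_log_le_aux (z - z ^ 2)
  have e : nuFun c a b z = (1/(c:ℂ)) * (2 * Complex.log ((c:ℂ)/2 - sqrtR a b z)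
      - Complex.log (z - z ^ 2)) := by rw [nuFun]; ring
  rw [e, norm_mul]
  have hcn : ‖(1/(c:ℂ))‖ = 1/c := by simp [abs_of_pos hc]
  rw [hcn]
  refine mul_le_mul_of_nonneg_left ?_ (by positivity)
  refine (norm_sub_le _ _).trans ?_
  rw [norm_mul]
  have : ‖(2:ℂ)‖ = 2 := by simp
  rw [this]
  linarith

lemma nuFun_measurable (c a b : ℝ) : Measurable (nuFun c a b) := by
  unfold nuFun sqrtR
  fun_prop

/-- The dominating function of `nuFun_bound` is integrable: logarithmic singularities only. -/
lemma bound_integrable (c x y : ℝ) : IntervalIntegrable (fun t : ℝ =>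
      (1/c) * (3 * (|Real.log t| + |Real.log (1 - t)| + 2 * |t| + 3) + 2 * (|t| + 3)
        + 3 * Real.pi)) MeasureTheory.volume x y := by
  have i1 : IntervalIntegrable (fun t : ℝ => |Real.log t|) MeasureTheory.volume x y :=
    intervalIntegral.intervalIntegrable_log'.abs
  have i2 : IntervalIntegrable (fun t : ℝ => |Real.log (1 - t)|) MeasureTheory.volume x y := by
    have := (intervalIntegral.intervalIntegrable_log' (a := 1 - x) (b := 1 - y)).comp_sub_left 1
    simp only [sub_sub_cancel] at this
    exact this.abs
  have i3 : IntervalIntegrable (fun t : ℝ => |t|) MeasureTheory.volume x y :=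
    continuous_abs.intervalIntegrable _ _
  have ik : ∀ k : ℝ, IntervalIntegrable (fun _ : ℝ => k) MeasureTheory.volume x y := fun k =>
    continuous_const.intervalIntegrable _ _
  exact ((((((i1.add i2).add (i3.const_mul 2)).add (ik 3)).const_mul 3).add
    ((i3.add (ik 3)).const_mul 2)).add (ik (3 * Real.pi))).const_mul (1/c)

/-- Boundary form of the fundamental theorem of calculus: increments of the boundary values of a
primitive of `ν` on the upper half-plane are integrals of the boundary values of `ν`. -/
lemma boundary_ftc {c a b : ℝ} (hc : 0 < c) (hc1 : c < 1) (ha : 0 < a) (hb : b < 1) (hab : a < b)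
    (h1 : a + b = 1) (h2 : a * b = c ^ 2 / 4) {ψ : ℂ → ℂ} {p : ℝ → ℂ}
    (hd : ∀ z : ℂ, 0 < z.im → HasDerivAt ψ (nuFun c a b z) z)
    (hp : ∀ x : ℝ, Tendsto (fun ε : ℝ => ψ (↑x + ↑ε * Complex.I)) (𝓝[>] 0) (𝓝 (p x)))
    {x y : ℝ} (hxy : x < y) {u v : ℝ → ℝ}
    (huv : ∀ t ∈ Ioo x y, t ≠ 0 → t ≠ 1 →
      Tendsto (fun ε : ℝ => nuFun c a b (↑t + ↑ε * Complex.I)) (𝓝[>] 0)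
        (𝓝 ((u t : ℂ) + (v t : ℂ) * Complex.I))) :
    IntervalIntegrable u MeasureTheory.volume x y ∧
    IntervalIntegrable v MeasureTheory.volume x y ∧
    (p y).re - (p x).re = ∫ t in x..y, u t ∧ (p y).im - (p x).im = ∫ t in x..y, v t := by
  set g : ℝ → ℝ := fun t : ℝ =>
      (1/c) * (3 * (|Real.log t| + |Real.log (1 - t)| + 2 * |t| + 3) + 2 * (|t| + 3)
        + 3 * Real.pi) with hg
  have hgi : IntervalIntegrable g MeasureTheory.volume x y := bound_integrable c x y
  have hmeas : ∀ ε : ℝ, Measurable (fun t : ℝ => nuFun c a b ((t:ℂ) + ε * Complex.I)) := fun ε =>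
    (nuFun_measurable c a b).comp (by fun_prop)
  have hne : ∀ s : ℝ, ∀ᵐ t : ℝ ∂MeasureTheory.volume, t ≠ s := fun s => by
    simp [MeasureTheory.ae_iff]
  have hb' : ∀ ε ∈ Ioo (0:ℝ) 1, ∀ᵐ t : ℝ ∂MeasureTheory.volume,
      ‖nuFun c a b ((t:ℂ) + ε * Complex.I)‖ ≤ g t := fun ε hε => by
    filter_upwards [hne 0, hne 1] with t ht0 ht1
    exact nuFun_bound hc hc1 ha hb hab h1 h2 ht0 ht1 hε.1 hε.2
  have hev : ∀ᶠ ε : ℝ in 𝓝[>] 0, ε ∈ Ioo (0:ℝ) 1 := Ioo_mem_nhdsGT one_pos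
  set w : ℝ → ℂ := fun t => (u t : ℂ) + (v t : ℂ) * Complex.I with hw
  have hlim : ∀ᵐ t : ℝ ∂MeasureTheory.volume, t ∈ Set.uIoc x y →
      Tendsto (fun ε : ℝ => nuFun c a b (↑t + ↑ε * Complex.I)) (𝓝[>] 0) (𝓝 (w t)) := by
    filter_upwards [hne 0, hne 1, hne y] with t ht0 ht1 hty ht
    rw [uIoc_of_le hxy.le] at ht
    exact huv t ⟨ht.1, lt_of_le_of_ne ht.2 hty⟩ ht0 ht1
  have hlim' : ∀ᵐ t : ℝ ∂(MeasureTheory.volume.restrict (Set.uIoc x y)),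
      Tendsto (fun ε : ℝ => nuFun c a b (↑t + ↑ε * Complex.I)) (𝓝[>] 0) (𝓝 (w t)) :=
    (MeasureTheory.ae_restrict_iff' measurableSet_uIoc).2 hlim
  have hwm : MeasureTheory.AEStronglyMeasurable w
      (MeasureTheory.volume.restrict (Set.uIoc x y)) :=
    aestronglyMeasurable_of_tendsto_ae (𝓝[>] (0:ℝ))
      (fun ε => (hmeas ε).aestronglyMeasurable) hlim'
  have hwb : ∀ᵐ t : ℝ ∂(MeasureTheory.volume.restrict (Set.uIoc x y)), ‖w t‖ ≤ g t := by
    filter_upwards [hlim', MeasureTheory.ae_restrict_of_ae (hne 0),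
      MeasureTheory.ae_restrict_of_ae (hne 1)] with t ht ht0 ht1
    refine le_of_tendsto ht.norm ?_
    filter_upwards [hev] with ε hε
    exact nuFun_bound hc hc1 ha hb hab h1 h2 ht0 ht1 hε.1 hε.2
  have hwi : IntervalIntegrable w MeasureTheory.volume x y := hgi.mono_fun' hwm hwb
  have hdc := intervalIntegral.tendsto_integral_filter_of_dominated_convergence
    (μ := MeasureTheory.volume) (l := 𝓝[>] (0:ℝ)) (a := x) (b := y)
    (F := fun (ε t : ℝ) => nuFun c a b ((t:ℂ) + ε * Complex.I)) (f := w) g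
    (Eventually.of_forall fun ε => (hmeas ε).aestronglyMeasurable)
    (by filter_upwards [hev] with ε hε
        filter_upwards [hb' ε hε] with t ht _ using ht) hgi hlim
  have hftc : ∀ ε ∈ Ioo (0:ℝ) 1, ∫ t in x..y, nuFun c a b ((t:ℂ) + ε * Complex.I) =
      ψ (y + ε * Complex.I) - ψ (x + ε * Complex.I) := fun ε hε => by
    refine intervalIntegral.integral_eq_sub_of_hasDerivAt
      (f := fun t : ℝ => ψ ((t:ℂ) + ε * Complex.I)) (fun t _ => ?_) ?_
    · have h := hd ((t:ℂ) + ε * Complex.I) (by simpa using hε.1)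
      have h3 : HasDerivAt (fun t : ℝ => (t:ℂ) + ε * Complex.I) 1 t :=
        (Complex.ofRealCLM.hasDerivAt (x := t)).add_const _
      simpa [Function.comp_def] using h.comp_of_eq t h3 rfl
    · exact hgi.mono_fun' (hmeas ε).aestronglyMeasurable
        (MeasureTheory.ae_restrict_of_ae (hb' ε hε))
  have hdiff : p y - p x = ∫ t in x..y, w t := by
    refine tendsto_nhds_unique ((hp y).sub (hp x)) (hdc.congr' ?_)
    filter_upwards [hev] with ε hε using hftc ε hε
  have hre : (fun t => Complex.reCLM (w t)) = u := by ext t; simp [hw]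
  have him : (fun t => Complex.imCLM (w t)) = v := by ext t; simp [hw]
  have iu : IntervalIntegrable u MeasureTheory.volume x y := by
    rw [← hre]
    exact ⟨Complex.reCLM.integrable_comp hwi.1, Complex.reCLM.integrable_comp hwi.2⟩
  have iv : IntervalIntegrable v MeasureTheory.volume x y := by
    rw [← him]
    exact ⟨Complex.imCLM.integrable_comp hwi.1, Complex.imCLM.integrable_comp hwi.2⟩
  refine ⟨iu, iv, ?_, ?_⟩
  · rw [← hre, Complex.reCLM.intervalIntegral_comp_comm hwi, ← hdiff]; simp
  · rw [← him, Complex.imCLM.intervalIntegral_comp_comm hwi, ← hdiff]; simp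

/-! ### Boundary values of the density -/

lemma arg_sub_mul_I {r s : ℝ} (hr : 0 < r) :
    Complex.arg ((r:ℂ) - (s:ℂ) * Complex.I) = -Real.arctan (s / r) := by
  have hre : ((r:ℂ) - (s:ℂ) * Complex.I).re = r := by simp
  have him : ((r:ℂ) - (s:ℂ) * Complex.I).im = -s := by simp
  have h := Complex.tan_arg ((r:ℂ) - (s:ℂ) * Complex.I)
  have hlt := (Complex.abs_arg_lt_pi_div_two_iff (z := (r:ℂ) - (s:ℂ) * Complex.I)).2
    (Or.inl (by rw [hre]; exact hr))
  rw [abs_lt] at hlt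
  rw [← Real.arctan_tan hlt.1 hlt.2, h, hre, him, neg_div, Real.arctan_neg]

lemma two_log_eq {x : ℝ} : 2 * Real.log x = Real.log (x ^ 2) := by
  rw [Real.log_pow]; norm_num

lemma nu_lim_neg {c a b : ℝ} (hc : 0 < c) (ha : 0 < a) (hb : b < 1)
    (hab : a < b) {t : ℝ} (ht : t < 0) :
    Tendsto (fun ε : ℝ => nuFun c a b (↑t + ↑ε * Complex.I)) (𝓝[>] 0)
        (𝓝 ((((2/c) * Real.log (c/2 + √((a-t)*(b-t))) - (1/c) * Real.log (t^2-t) : ℝ) : ℂ)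
          + ((-(π/c) : ℝ) : ℂ) * Complex.I)) := by
  have hs := sqrtR_tendsto (a := a) (b := b) (t := t) (by linarith) (by linarith)
  rw [sqrtR_left hab (by linarith)] at hs
  have hp : 0 < c/2 + √((a-t)*(b-t)) := by positivity
  have e1 := log_tendsto_pos hp (f := fun ε : ℝ => (c:ℂ)/2 - sqrtR a b ((t:ℂ) + ε * Complex.I))
    (by convert (tendsto_const_nhds (x := (c:ℂ)/2)).sub hs using 2; push_cast; ring)
  have e2 := log_tendsto_above (x := t - t^2) (by nlinarith) (sub_sq_tendsto t)
    (by filter_upwards [self_mem_nhdsWithin] with ε hε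
        rw [im_vert_sub_sq]; exact mul_pos hε (by linarith))
  have := (e1.const_mul (2/(c:ℂ))).sub (e2.const_mul (1/(c:ℂ)))
  simp only [nuFun]
  convert this using 2
  rw [neg_sub]; push_cast; ring

lemma nu_lim_mid {c a b : ℝ} (hc : 0 < c) (ha : 0 < a) (hb : b < 1)
    (hab : a < b) (h1 : a + b = 1) (h2 : a * b = c ^ 2 / 4) {t : ℝ} (hta : a < t) (htb : t < b) :
    Tendsto (fun ε : ℝ => nuFun c a b (↑t + ↑ε * Complex.I)) (𝓝[>] 0)
        (𝓝 (((0 : ℝ) : ℂ)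
          + ((-(2/c) * Real.arctan (√((t-a)*(b-t)) / (c/2)) : ℝ) : ℂ) * Complex.I)) := by
  have hs := sqrtR_tendsto (a := a) (b := b) (t := t) hta.ne' htb.ne
  rw [sqrtR_mid hta htb] at hs
  have hpos : 0 < t - t^2 := by nlinarith
  set s := √((t-a)*(b-t)) with hsdef
  have hs2 : s ^ 2 = t - t^2 - c^2/4 := by
    rw [hsdef, Real.sq_sqrt (by nlinarith)]; linear_combination t * h1 - h2
  have hw : Tendsto (fun ε : ℝ => (c:ℂ)/2 - sqrtR a b ((t:ℂ) + ε * Complex.I)) (𝓝[>] 0)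
      (𝓝 (((c/2 : ℝ) : ℂ) - (s:ℂ) * Complex.I)) := by
    have := (tendsto_const_nhds (x := (c:ℂ)/2)).sub hs
    push_cast; exact this
  have hsl : ((c/2 : ℝ) : ℂ) - (s:ℂ) * Complex.I ∈ Complex.slitPlane := by
    left; simp; linarith
  have e1 := hw.clog hsl
  have e2 := log_tendsto_pos hpos (sub_sq_tendsto t)
  have := (e1.const_mul (2/(c:ℂ))).sub (e2.const_mul (1/(c:ℂ)))
  simp only [nuFun]
  convert this using 2
  have hnorm : Real.log ‖((c/2 : ℝ) : ℂ) - (s:ℂ) * Complex.I‖ = Real.log (t - t^2) / 2 := by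
    have : ‖((c/2 : ℝ) : ℂ) - (s:ℂ) * Complex.I‖ ^ 2 = t - t^2 := by
      rw [← Complex.normSq_eq_norm_sq, Complex.normSq_apply]
      simp; linear_combination hs2
    rw [← this, ← two_log_eq]; ring
  have hlog : Complex.log (((c/2 : ℝ) : ℂ) - (s:ℂ) * Complex.I) =
      ((Real.log (t - t^2) / 2 : ℝ) : ℂ) + ((-Real.arctan (s / (c/2)) : ℝ) : ℂ) * Complex.I := by
    rw [Complex.log, hnorm, arg_sub_mul_I (by linarith)]
  rw [hlog]; push_cast; ring

lemma nu_lim_right {c a b : ℝ} (hc : 0 < c) (ha : 0 < a)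
    (hab : a < b) (h1 : a + b = 1) (h2 : a * b = c ^ 2 / 4) {t : ℝ} (htb : b < t) (ht1 : t < 1) :
    Tendsto (fun ε : ℝ => nuFun c a b (↑t + ↑ε * Complex.I)) (𝓝[>] 0)
        (𝓝 ((((2/c) * Real.log (c/2 - √((t-a)*(t-b))) - (1/c) * Real.log (t-t^2) : ℝ) : ℂ)
          + ((0 : ℝ) : ℂ) * Complex.I)) ∧
    (2/c) * Real.log (c/2 - √((t-a)*(t-b))) - (1/c) * Real.log (t-t^2) < 0 := by
  have hs := sqrtR_tendsto (a := a) (b := b) (t := t) (by linarith) htb.ne'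
  rw [sqrtR_right hab htb] at hs
  have hpos : 0 < t - t^2 := by nlinarith
  have hp0 : 0 < (t-a)*(t-b) := mul_pos (by linarith) (by linarith)
  set s := √((t-a)*(t-b)) with hsdef
  have hs0 : 0 < s := Real.sqrt_pos.2 hp0
  have hs2 : s ^ 2 = t^2 - t + c^2/4 := by
    rw [hsdef, Real.sq_sqrt hp0.le]; linear_combination -t * h1 + h2
  have hsc : s < c/2 := by
    refine lt_of_pow_lt_pow_left₀ 2 (by positivity) ?_
    rw [hs2]; nlinarith
  have hp : 0 < c/2 - s := by linarith
  have e1 := log_tendsto_pos hp (f := fun ε : ℝ => (c:ℂ)/2 - sqrtR a b ((t:ℂ) + ε * Complex.I))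
    (by convert (tendsto_const_nhds (x := (c:ℂ)/2)).sub hs using 2; push_cast; ring)
  have e2 := log_tendsto_pos hpos (sub_sq_tendsto t)
  have := (e1.const_mul (2/(c:ℂ))).sub (e2.const_mul (1/(c:ℂ)))
  refine ⟨?_, ?_⟩
  · simp only [nuFun]
    convert this using 2
    push_cast; ring
  · have hl : Real.log ((c/2 - s)^2) < Real.log (t - t^2) :=
      Real.log_lt_log (by positivity) (by nlinarith [mul_pos hs0 hp])
    rw [← two_log_eq] at hl
    have := mul_pos (one_div_pos.2 hc) (sub_pos.2 hl)
    have e : (2/c) * Real.log (c/2 - s) = (1/c) * (2 * Real.log (c/2 - s)) := by ring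
    rw [e]; linarith

lemma nu_lim_far {c a b : ℝ} (hc : 0 < c) (ha : 0 < a) (hb : b < 1)
    (hab : a < b) (h1 : a + b = 1) (h2 : a * b = c ^ 2 / 4) {t : ℝ} (ht1 : 1 < t) :
    Tendsto (fun ε : ℝ => nuFun c a b (↑t + ↑ε * Complex.I)) (𝓝[>] 0)
        (𝓝 ((((2/c) * Real.log (√((t-a)*(t-b)) - c/2) - (1/c) * Real.log (t^2-t) : ℝ) : ℂ)
          + ((-(π/c) : ℝ) : ℂ) * Complex.I)) ∧
    (2/c) * Real.log (√((t-a)*(t-b)) - c/2) - (1/c) * Real.log (t^2-t) < 0 := by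
  have hs := sqrtR_tendsto (a := a) (b := b) (t := t) (by linarith) (by linarith)
  rw [sqrtR_right hab (by linarith)] at hs
  have hpos : 0 < t^2 - t := by nlinarith
  have hp0 : 0 < (t-a)*(t-b) := mul_pos (by linarith) (by linarith)
  set s := √((t-a)*(t-b)) with hsdef
  have hs0 : 0 < s := Real.sqrt_pos.2 hp0
  have hs2 : s ^ 2 = t^2 - t + c^2/4 := by
    rw [hsdef, Real.sq_sqrt hp0.le]; linear_combination -t * h1 + h2
  have hsc : c/2 < s := by
    refine lt_of_pow_lt_pow_left₀ 2 hs0.le ?_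
    rw [hs2]; nlinarith
  have e1 := log_tendsto_below (x := c/2 - s) (by linarith)
    (f := fun ε : ℝ => (c:ℂ)/2 - sqrtR a b ((t:ℂ) + ε * Complex.I))
    (by convert (tendsto_const_nhds (x := (c:ℂ)/2)).sub hs using 2; push_cast; ring)
    (by filter_upwards [self_mem_nhdsWithin] with ε hε
        have := sqrtR_im_pos a b (z := (t:ℂ) + ε * Complex.I) (by simpa using hε)
        have hc' : ((c:ℂ)/2).im = 0 := by
          rw [show (c:ℂ)/2 = ((c/2:ℝ):ℂ) by push_cast; rfl]; exact Complex.ofReal_im _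
        rw [Complex.sub_im, hc']; linarith)
  have e2 := log_tendsto_below (x := t - t^2) (by linarith) (sub_sq_tendsto t)
    (by filter_upwards [self_mem_nhdsWithin] with ε hε
        rw [im_vert_sub_sq]; exact mul_neg_of_pos_of_neg hε (by linarith))
  have := (e1.const_mul (2/(c:ℂ))).sub (e2.const_mul (1/(c:ℂ)))
  refine ⟨?_, ?_⟩
  · simp only [nuFun]
    convert this using 2
    rw [neg_sub, neg_sub]; push_cast; ring
  · have hp : 0 < s - c/2 := by linarith
    have hl : Real.log ((s - c/2)^2) < Real.log (t^2 - t) :=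
      Real.log_lt_log (by positivity) (by nlinarith [mul_pos hc hp])
    rw [← two_log_eq] at hl
    have := mul_pos (one_div_pos.2 hc) (sub_pos.2 hl)
    have e : (2/c) * Real.log (s - c/2) = (1/c) * (2 * Real.log (s - c/2)) := by ring
    rw [e]; linarith

lemma nu_neg_pos {c a b : ℝ} (hc : 0 < c) (ha : 0 < a)
    (hab : a < b) (h1 : a + b = 1) (h2 : a * b = c ^ 2 / 4) {t : ℝ} (ht : t < 0) :
    0 < (2/c) * Real.log (c/2 + √((a-t)*(b-t))) - (1/c) * Real.log (t^2-t) := by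
  have hp0 : 0 < (a-t)*(b-t) := mul_pos (by linarith) (by linarith)
  set s := √((a-t)*(b-t)) with hsdef
  have hs0 : 0 < s := Real.sqrt_pos.2 hp0
  have hs2 : s ^ 2 = t^2 - t + c^2/4 := by
    rw [hsdef, Real.sq_sqrt hp0.le]; linear_combination -t * h1 + h2
  have hl : Real.log (t^2 - t) < Real.log ((c/2 + s)^2) :=
    Real.log_lt_log (by nlinarith) (by nlinarith [mul_pos hc hs0])
  rw [← two_log_eq] at hl
  have := mul_pos (one_div_pos.2 hc) (sub_pos.2 hl)
  have e : (2/c) * Real.log (c/2 + s) = (1/c) * (2 * Real.log (c/2 + s)) := by ring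
  rw [e]; linarith

/-- On `(0,a)`, which lies in the domain of analyticity, `ν` is real and positive. -/
lemma nu_inner {c a b : ℝ} (hc : 0 < c) (hb : b < 1)
    (hab : a < b) (h1 : a + b = 1) (h2 : a * b = c ^ 2 / 4) {t : ℝ} (ht0 : 0 < t) (hta : t < a) :
    ∃ r : ℝ, 0 < r ∧ nuFun c a b (t:ℂ) = (r:ℂ) := by
  have hp0 : 0 < (a-t)*(b-t) := mul_pos (by linarith) (by linarith)
  have hR := sqrtR_left hab hta
  set s := √((a-t)*(b-t)) with hsdef
  have hs0 : 0 < s := Real.sqrt_pos.2 hp0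
  have hs2 : s ^ 2 = t^2 - t + c^2/4 := by
    rw [hsdef, Real.sq_sqrt hp0.le]; linear_combination -t * h1 + h2
  have hpos : 0 < t - t^2 := by nlinarith
  refine ⟨(2/c) * Real.log (c/2 + s) - (1/c) * Real.log (t - t^2), ?_, ?_⟩
  · have hl : Real.log (t - t^2) < Real.log ((c/2 + s)^2) :=
      Real.log_lt_log (by nlinarith) (by nlinarith [mul_pos hc hs0])
    rw [← two_log_eq] at hl
    have := mul_pos (one_div_pos.2 hc) (sub_pos.2 hl)
    have e : (2/c) * Real.log (c/2 + s) = (1/c) * (2 * Real.log (c/2 + s)) := by ring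
    rw [e]; linarith
  · rw [nuFun, hR]
    push_cast [Complex.ofReal_log hpos.le, Complex.ofReal_log (show 0 ≤ c/2 + s by positivity)]
    ring_nf

/-! ### The period integral -/

/-- The period integral. An antiderivative is
`u·arctan(2s/c) - (c/2)·arctan(u/s) + (1/2)·arctan(c u/s)` with `u = t - 1/2`,
`s = √((t-a)(b-t))`; only the last two terms survive at the endpoints. -/
lemma integral_arctan {c a b : ℝ} (hc : 0 < c)
    (hab : a < b) (h1 : a + b = 1) (h2 : a * b = c ^ 2 / 4)
    (hi : IntervalIntegrable (fun t => Real.arctan (√((t-a)*(b-t)) / (c/2)))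
      MeasureTheory.volume a b) :
    ∫ t in a..b, Real.arctan (√((t-a)*(b-t)) / (c/2)) = π/2 * (1 - c) := by
  set S : ℝ → ℝ := fun t => √((t-a)*(b-t)) with hS
  set F : ℝ → ℝ := fun t => (t - 1/2) * Real.arctan (S t / (c/2))
    - (c/2) * Real.arctan ((t - 1/2) / S t) + (1/2) * Real.arctan (c * (t - 1/2) / S t) with hF
  have hScont : Continuous S := by rw [hS]; fun_prop
  have hSpos : ∀ t ∈ Ioo a b, 0 < S t := fun t ht =>
    Real.sqrt_pos.2 (mul_pos (by linarith [ht.1]) (by linarith [ht.2]))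
  have hder : ∀ t ∈ Ioo a b, HasDerivAt F (Real.arctan (S t / (c/2))) t := by
    intro t ht
    have hp0 : 0 < (t-a)*(b-t) := mul_pos (by linarith [ht.1]) (by linarith [ht.2])
    have hs0 := hSpos t ht
    have hs2 : S t ^ 2 = t - t^2 - c^2/4 := by
      rw [hS]; simp only; rw [Real.sq_sqrt hp0.le]; linear_combination t * h1 - h2
    have hu : HasDerivAt (fun t : ℝ => t - 1/2) 1 t := (hasDerivAt_id t).sub_const _
    have hSd : HasDerivAt S (-(t - 1/2) / S t) t := by
      have h3 : HasDerivAt (fun t : ℝ => (t-a)*(b-t)) (1 * (b - t) + (t - a) * (-1)) t :=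
        ((hasDerivAt_id t).sub_const a).mul ((hasDerivAt_id t).const_sub b)
      have h4 := h3.sqrt hp0.ne'
      convert h4 using 1
      change _ = _ / (2 * S t)
      field_simp
      linear_combination -h1
    have d1 := hu.mul (hSd.div_const (c/2)).arctan
    have d2 := ((hu.div hSd hs0.ne').arctan).const_mul (c/2)
    have d3 := (((hu.const_mul c).div hSd hs0.ne').arctan).const_mul (1/2)
    have d := (d1.sub d2).add d3
    refine HasDerivAt.congr_deriv d ?_
    simp only [Pi.div_apply]
    have hs2' : (S t)^2 = (1 - c^2)/4 - (t - 1/2)^2 := by rw [hs2]; ring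
    set s := S t
    set u := t - 1/2
    have hm : 0 < 1 - 4 * u^2 := by nlinarith [sq_pos_of_pos hs0, sq_pos_of_pos hc]
    have hcc : 0 < 1 - c^2 := by nlinarith [sq_pos_of_pos hs0, sq_nonneg u]
    have k1 : 1 + (s / (c/2))^2 = (1 - 4*u^2) / c^2 := by
      field_simp; linear_combination 4 * hs2'
    have k2 : 1 + (u / s)^2 = (1 - c^2) / 4 / s^2 := by
      field_simp; linear_combination 4 * hs2'
    have k3 : 1 + (c * u / s)^2 = (1 - c^2) * (1 - 4*u^2) / 4 / s^2 := by
      field_simp; linear_combination 4 * hs2'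
    have k4 : 1 * s - u * (-u / s) = (1 - c^2) / 4 / s := by
      field_simp; linear_combination 4 * hs2'
    have k5 : c * 1 * s - c * u * (-u / s) = c * ((1 - c^2) / 4 / s) := by
      rw [← k4]; ring
    rw [k1, k2, k3, k4, k5]
    have hinv : (1 - 4*u^2)⁻¹ * (1 - 4*u^2) = 1 := inv_mul_cancel₀ hm.ne'
    field_simp
    linear_combination c * hinv
  have hr : 0 < b - 1/2 := by linarith
  have hSa : S a = 0 := by simp [hS]
  have hSb : S b = 0 := by simp [hS]
  have hSa' : Tendsto S (𝓝[>] a) (𝓝[>] 0) := by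
    refine tendsto_nhdsWithin_iff.2 ⟨?_, ?_⟩
    · have := (hScont.tendsto a).mono_left (nhdsWithin_le_nhds (s := Ioi a)); rwa [hSa] at this
    · filter_upwards [Ioo_mem_nhdsGT hab] with t ht using hSpos t ht
  have hSb' : Tendsto S (𝓝[<] b) (𝓝[>] 0) := by
    refine tendsto_nhdsWithin_iff.2 ⟨?_, ?_⟩
    · have := (hScont.tendsto b).mono_left (nhdsWithin_le_nhds (s := Iio b)); rwa [hSb] at this
    · filter_upwards [Ioo_mem_nhdsLT hab] with t ht using hSpos t ht
  have hia := tendsto_inv_nhdsGT_zero.comp hSa'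
  have hib := tendsto_inv_nhdsGT_zero.comp hSb'
  have hlin : ∀ (k x : ℝ) (l : Filter ℝ), l ≤ 𝓝 x →
      Tendsto (fun t : ℝ => k * (t - 1/2)) l (𝓝 (k * (x - 1/2))) := fun k x l hl =>
    ((by fun_prop : Continuous (fun t : ℝ => k * (t - 1/2))).tendsto x).mono_left hl
  have hz : ∀ (x : ℝ) (l : Filter ℝ), l ≤ 𝓝 x → S x = 0 →
      Tendsto (fun t : ℝ => (t - 1/2) * Real.arctan (S t / (c/2))) l (𝓝 0) := fun x l hl h0 => by
    have hcont : Continuous (fun t : ℝ => (t - 1/2) * Real.arctan (S t / (c/2))) :=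
      (continuous_id.sub continuous_const).mul
        (Real.continuous_arctan.comp (hScont.div_const _))
    have := (hcont.tendsto x).mono_left hl
    simpa [h0] using this
  have hab' : a - 1/2 < 0 := by linarith
  have top : ∀ k : ℝ, 0 < k → Tendsto (fun t => Real.arctan (k * (t - 1/2) / S t)) (𝓝[<] b)
      (𝓝 (π/2)) := fun k hk =>
    ((Real.tendsto_arctan_atTop.mono_right nhdsWithin_le_nhds).comp
      ((hlin k b _ nhdsWithin_le_nhds).pos_mul_atTop (mul_pos hk hr) hib))
  have bot : ∀ k : ℝ, 0 < k → Tendsto (fun t => Real.arctan (k * (t - 1/2) / S t)) (𝓝[>] a)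
      (𝓝 (-(π/2))) := fun k hk =>
    ((Real.tendsto_arctan_atBot.mono_right nhdsWithin_le_nhds).comp
      ((hlin k a _ nhdsWithin_le_nhds).neg_mul_atTop (mul_neg_of_pos_of_neg hk hab') hia))
  have t1 := top 1 one_pos
  have b1 := bot 1 one_pos
  simp only [one_mul] at t1 b1
  have lb := ((hz b _ nhdsWithin_le_nhds hSb).sub (t1.const_mul (c/2))).add
    ((top c hc).const_mul (1/2))
  have la := ((hz a _ nhdsWithin_le_nhds hSa).sub (b1.const_mul (c/2))).add
    ((bot c hc).const_mul (1/2))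
  rw [intervalIntegral.integral_eq_sub_of_hasDerivAt_of_tendsto hab hder hi la lb]
  ring

/-! ### The two sides of the real axis -/

/-- The mapping properties on the upper side of the real axis, for any primitive of `ν` on the
upper half-plane whose boundary value at `a` vanishes. -/
lemma upper_side {c a b : ℝ} (hc : 0 < c) (hc1 : c < 1) (ha : 0 < a) (hb : b < 1) (hab : a < b)
    (h1 : a + b = 1) (h2 : a * b = c ^ 2 / 4) {ψ : ℂ → ℂ} {p : ℝ → ℂ}
    (hd : ∀ z : ℂ, 0 < z.im → HasDerivAt ψ (nuFun c a b z) z)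
    (hp : ∀ x : ℝ, Tendsto (fun ε : ℝ => ψ (↑x + ↑ε * Complex.I)) (𝓝[>] 0) (𝓝 (p x)))
    (hpa : p a = 0) :
    (∀ x : ℝ, x < 0 → (p x).re < (p 0).re ∧ (p x).im = (p 0).im - π * x / c)
    ∧ p b = ((1:ℂ) - 1/(c:ℂ)) * (Real.pi : ℂ) * Complex.I
    ∧ (∀ x : ℝ, a < x → x < b → (p x).re = 0 ∧ (p x).im < 0)
    ∧ (∀ x : ℝ, b < x → x ≤ 1 → (p x).re < 0 ∧ (p x).im = (1 - 1/c) * π)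
    ∧ (∀ x : ℝ, 1 < x → (p x).re < (p 1).re ∧ (p x).im = (1 - x/c) * π) := by
  have ftc := fun {x y : ℝ} (hxy : x < y) {u v : ℝ → ℝ} =>
    boundary_ftc hc hc1 ha hb hab h1 h2 hd hp hxy (u := u) (v := v)
  have mid := fun (x : ℝ) (hax : a < x) (hxb : x ≤ b) =>
    ftc hax (u := fun _ => 0) (v := fun t => -(2/c) * Real.arctan (√((t-a)*(b-t)) / (c/2)))
      (fun t ht _ _ => nu_lim_mid hc ha hb hab h1 h2 ht.1 (ht.2.trans_le hxb))
  have hpb : (p b).re = 0 ∧ (p b).im = (1 - 1/c) * π := by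
    obtain ⟨-, iv, hu, hv⟩ := mid b hab le_rfl
    have iv' : IntervalIntegrable (fun t => Real.arctan (√((t-a)*(b-t)) / (c/2)))
        MeasureTheory.volume a b := by
      have := iv.const_mul (-(c/2))
      refine this.congr (fun t _ => ?_)
      field_simp
    rw [intervalIntegral.integral_const_mul, integral_arctan hc hab h1 h2 iv'] at hv
    simp only [hpa, Complex.zero_re, Complex.zero_im, sub_zero,
      intervalIntegral.integral_zero] at hu hv
    refine ⟨hu, ?_⟩
    rw [hv]; field_simp; ring
  have right : ∀ x : ℝ, b < x → x ≤ 1 → (p x).re < 0 ∧ (p x).im = (1 - 1/c) * π := by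
    intro x hbx hx1
    obtain ⟨iu, -, hu, hv⟩ := ftc hbx
      (u := fun t => (2/c) * Real.log (c/2 - √((t-a)*(t-b))) - (1/c) * Real.log (t-t^2))
      (v := fun _ => 0)
      (fun t ht _ _ => (nu_lim_right hc ha hab h1 h2 ht.1 (ht.2.trans_le hx1)).1)
    have hneg := intervalIntegral.intervalIntegral_pos_of_pos_on iu.neg
      (fun t ht => neg_pos.2 (nu_lim_right hc ha hab h1 h2 ht.1 (ht.2.trans_le hx1)).2) hbx
    simp only [Pi.neg_apply] at hneg
    rw [intervalIntegral.integral_neg] at hneg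
    simp only [intervalIntegral.integral_zero] at hv
    exact ⟨by linarith [hpb.1], by linarith [hpb.2]⟩
  refine ⟨fun x hx => ?_, ?_, fun x hax hxb => ?_, right, fun x hx => ?_⟩
  · obtain ⟨iu, -, hu, hv⟩ := ftc hx
      (u := fun t => (2/c) * Real.log (c/2 + √((a-t)*(b-t))) - (1/c) * Real.log (t^2-t))
      (v := fun _ => -(π/c)) (fun t ht _ _ => nu_lim_neg hc ha hb hab ht.2)
    have hpos := intervalIntegral.intervalIntegral_pos_of_pos_on iu
      (fun t ht => nu_neg_pos hc ha hab h1 h2 ht.2) hx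
    rw [intervalIntegral.integral_const, smul_eq_mul] at hv
    refine ⟨by linarith, ?_⟩
    have e : (0 - x) * -(π/c) = π * x / c := by ring
    linarith
  · apply Complex.ext
    · rw [hpb.1]; simp [-Complex.ofReal_inv]
    · rw [hpb.2]; simp [-Complex.ofReal_inv]
  · obtain ⟨-, iv, hu, hv⟩ := mid x hax hxb.le
    simp only [hpa, Complex.zero_re, Complex.zero_im, sub_zero,
      intervalIntegral.integral_zero] at hu hv
    refine ⟨hu, ?_⟩
    have hpos := intervalIntegral.intervalIntegral_pos_of_pos_on iv.neg (fun t ht => by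
      have hs : 0 < √((t-a)*(b-t)) :=
        Real.sqrt_pos.2 (mul_pos (by linarith [ht.1]) (by linarith [ht.2]))
      have := Real.arctan_pos.2 (show 0 < √((t-a)*(b-t)) / (c/2) by positivity)
      have := mul_pos (div_pos two_pos hc) this
      simp only [Pi.neg_apply]; linarith) hax
    simp only [Pi.neg_apply] at hpos
    rw [intervalIntegral.integral_neg] at hpos
    linarith
  · obtain ⟨iu, -, hu, hv⟩ := ftc hx
      (u := fun t => (2/c) * Real.log (√((t-a)*(t-b)) - c/2) - (1/c) * Real.log (t^2-t))
      (v := fun _ => -(π/c)) (fun t ht _ _ => (nu_lim_far hc ha hb hab h1 h2 ht.1).1)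
    have hneg := intervalIntegral.intervalIntegral_pos_of_pos_on iu.neg
      (fun t ht => neg_pos.2 (nu_lim_far hc ha hb hab h1 h2 ht.1).2) hx
    simp only [Pi.neg_apply] at hneg
    rw [intervalIntegral.integral_neg] at hneg
    rw [intervalIntegral.integral_const, smul_eq_mul] at hv
    have hp1 := (right 1 hb le_rfl).2
    have e : (x - 1) * -(π/c) = (1 - x/c) * π - (1 - 1/c) * π := by ring
    exact ⟨by linarith, by linarith⟩

lemma conj_arg_ne {z : ℂ} (h : z ∈ Complex.slitPlane) : z.arg ≠ π :=
  (Complex.mem_slitPlane_iff_arg.1 h).1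

/-- Schwarz symmetry of `ν`. -/
lemma nuFun_conj (c a b : ℝ) {z : ℂ} (hz : 0 < z.im) :
    (starRingEnd ℂ) (nuFun c a b ((starRingEnd ℂ) z)) = nuFun c a b z := by
  have h_two : (starRingEnd ℂ) (2:ℂ) = 2 := Complex.conj_eq_iff_im.2 (by simp)
  have half : ∀ r : ℝ, ((starRingEnd ℂ) z - r) ^ ((1:ℂ)/2) =
      (starRingEnd ℂ) ((z - r) ^ ((1:ℂ)/2)) := fun r => by
    have h := Complex.conj_cpow (z - r) ((1:ℂ)/2)
      (conj_arg_ne (Or.inr (by simpa using hz.ne')))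
    simpa [h_two] using h
  have hs : sqrtR a b ((starRingEnd ℂ) z) = (starRingEnd ℂ) (sqrtR a b z) := by
    rw [sqrtR, sqrtR, half, half, map_mul]
  have hw : (c:ℂ)/2 - sqrtR a b z ∈ Complex.slitPlane := by
    right
    have hc' : ((c:ℂ)/2).im = 0 := by
      rw [show (c:ℂ)/2 = ((c/2:ℝ):ℂ) by push_cast; rfl]; exact Complex.ofReal_im _
    rw [Complex.sub_im, hc']
    have := sqrtR_im_pos a b hz
    linarith
  have hq : z - z^2 ∈ Complex.slitPlane := by
    by_cases h : z.re = 1/2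
    · left
      have e : (z - z^2).re = z.re - (z.re * z.re - z.im * z.im) := by simp [pow_two]
      rw [e, h]; nlinarith
    · right
      have e : (z - z^2).im = z.im * (1 - 2 * z.re) := by simp [pow_two]; ring
      rw [e]
      refine mul_ne_zero hz.ne' (fun h' => h (by linarith))
  have l1 := Complex.log_conj _ (conj_arg_ne hw)
  have l2 := Complex.log_conj _ (conj_arg_ne hq)
  simp only [map_sub, map_div₀, map_pow, map_ofNat, Complex.conj_ofReal] at l1 l2
  rw [nuFun, hs, l1, l2]
  simp [nuFun, h_two]

/-- mapping properties of the auxiliary function `φ̃(z) = ∫_a^z ν(s) ds`,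
characterized as the antiderivative of `ν` on `D = ℂ∖((−∞,0] ∪ [a,+∞))` vanishing at `a`.
Boundary values `φ̃_±(x) = lim_{ε→0⁺} φ̃(x ± iε)`. -/
theorem phi_tilde_mapping_properties
    (c : ℝ) (hc0 : 0 < c) (hc1 : c < 1)
    (a b : ℝ)
    (ha : a = (1 - Real.sqrt (1 - c ^ 2)) / 2)
    (hb : b = (1 + Real.sqrt (1 - c ^ 2)) / 2)
    (ν : ℂ → ℂ)
    (hν : ∀ z, ν z =
      (2/(c:ℂ)) * Complex.log ((c:ℂ)/2 - (z - (a:ℂ)) ^ ((1:ℂ)/2) * (z - (b:ℂ)) ^ ((1:ℂ)/2))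
        - (1/(c:ℂ)) * Complex.log (z - z ^ 2))
    (D : Set ℂ)
    (hD : D = {z : ℂ | ¬ (z.im = 0 ∧ (z.re ≤ 0 ∨ a ≤ z.re))})
    (φt : ℂ → ℂ)
    (hderiv : ∀ z ∈ D, HasDerivAt φt (ν z) z)
    (hbase : Tendsto φt (nhdsWithin (a:ℂ) D) (𝓝 0))
    (φp φm : ℝ → ℂ)
    (hφp : ∀ x : ℝ, Tendsto (fun ε : ℝ => φt (↑x + ↑ε * Complex.I)) (𝓝[>] 0) (𝓝 (φp x)))
    (hφm : ∀ x : ℝ, Tendsto (fun ε : ℝ => φt (↑x - ↑ε * Complex.I)) (𝓝[>] 0) (𝓝 (φm x)))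
    (φ0 : ℂ)
    (h0 : Tendsto φt (nhdsWithin (0:ℂ) D) (𝓝 φ0)) :
    -- (i) x ∈ (−∞,0)
    (∀ x : ℝ, x < 0 →
        (φp x).re < φ0.re ∧ (φm x).re < φ0.re ∧
        (φp x).im = -(π * x / c) ∧ (φm x).im = π * x / c)
    -- (ii) x ∈ [0,a)
    ∧ (φ0.im = 0 ∧ φ0.re < 0)
    ∧ (∀ x : ℝ, 0 < x → x < a → (φt (x:ℂ)).im = 0 ∧ (φt (x:ℂ)).re < 0)
    -- (iii) φ̃(a) = 0 and φ̃_±(b) = ±(1 − 1/c)πi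
    ∧ Tendsto φt (nhdsWithin (a:ℂ) D) (𝓝 0)
    ∧ (φp b = ((1:ℂ) - 1/(c:ℂ)) * (Real.pi : ℂ) * Complex.I ∧
       φm b = -(((1:ℂ) - 1/(c:ℂ)) * (Real.pi : ℂ) * Complex.I))
    -- (iv) x ∈ (a,b)
    ∧ (∀ x : ℝ, a < x → x < b →
        (φp x).re = 0 ∧ (φm x).re = 0 ∧
        (φp x).arg = -(π/2) ∧ (φm x).arg = π/2)
    -- (v) x ∈ (b,1]
    ∧ (∀ x : ℝ, b < x → x ≤ 1 →
        (φp x).re < 0 ∧ (φm x).re < 0 ∧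
        (φp x).im = (1 - 1/c) * π ∧ (φm x).im = -((1 - 1/c) * π))
    -- (vi) x ∈ (1,+∞)
    ∧ (∀ x : ℝ, 1 < x →
        (φp x).re < (φp 1).re ∧ (φm x).re < (φm 1).re ∧
        (φp x).im = (1 - x/c) * π ∧ (φm x).im = -((1 - x/c) * π)) := by
  have hνf : ν = nuFun c a b := by
    funext z; rw [hν, nuFun, sqrtR]
  subst hνf
  have hc2 : c ^ 2 < 1 := by nlinarith
  have hq0 : 0 < 1 - c ^ 2 := by linarith
  have hq := Real.sq_sqrt hq0.le
  have hqpos := Real.sqrt_pos.2 hq0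
  have hqlt : √(1 - c ^ 2) < 1 := by
    refine lt_of_pow_lt_pow_left₀ 2 one_pos.le ?_
    rw [hq]; nlinarith [sq_pos_of_pos hc0]
  have ha0 : 0 < a := by rw [ha]; linarith
  have hb1 : b < 1 := by rw [hb]; linarith
  have hab : a < b := by rw [ha, hb]; linarith
  have h1 : a + b = 1 := by rw [ha, hb]; ring
  have h2 : a * b = c ^ 2 / 4 := by rw [ha, hb]; linear_combination -(1/4) * hq
  clear hν ha hb
  have memU : ∀ z : ℂ, z.im ≠ 0 → z ∈ D := fun z hz => by
    rw [hD]; exact fun h => hz h.1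
  have memI : ∀ t : ℝ, 0 < t → t < a → (t:ℂ) ∈ D := fun t h0t hta => by
    rw [hD]; rintro ⟨-, h | h⟩ <;> simp at h <;> linarith
  have hvp : ∀ x : ℝ, Tendsto (fun ε : ℝ => (x:ℂ) + ε * Complex.I) (𝓝[>] 0) (𝓝[D] (x:ℂ)) :=
    fun x => by
      refine tendsto_nhdsWithin_iff.2 ⟨tendsto_vert x, ?_⟩
      filter_upwards [self_mem_nhdsWithin] with ε hε
      exact memU _ (by simpa using (ne_of_gt hε))
  have hvm : ∀ x : ℝ, Tendsto (fun ε : ℝ => (x:ℂ) - ε * Complex.I) (𝓝[>] 0) (𝓝[D] (x:ℂ)) :=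
    fun x => by
      refine tendsto_nhdsWithin_iff.2 ⟨?_, ?_⟩
      · have : Continuous (fun ε : ℝ => (x:ℂ) - ε * Complex.I) := by fun_prop
        have h := (this.tendsto 0).mono_left (nhdsWithin_le_nhds (s := Ioi 0))
        simpa using h
      · filter_upwards [self_mem_nhdsWithin] with ε hε
        exact memU _ (by simpa using (ne_of_gt hε))
  have hpa : φp a = 0 := tendsto_nhds_unique (hφp a) (hbase.comp (hvp a))
  have hma : φm a = 0 := tendsto_nhds_unique (hφm a) (hbase.comp (hvm a))
  have hp0 : φp 0 = φ0 :=
    tendsto_nhds_unique (hφp 0) (h0.comp (by simpa using hvp 0))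
  have hm0 : φm 0 = φ0 :=
    tendsto_nhds_unique (hφm 0) (h0.comp (by simpa using hvm 0))
  -- On `(0,a)` the real part is strictly increasing and the imaginary part is constant.
  have hder : ∀ t ∈ Ioo 0 a, ∃ r : ℝ, 0 < r ∧
      HasDerivAt (fun s : ℝ => φt (s:ℂ)) (r:ℂ) t := fun t ht => by
    obtain ⟨r, hr, hrt⟩ := nu_inner hc0 hb1 hab h1 h2 ht.1 ht.2
    refine ⟨r, hr, ?_⟩
    have h := hderiv (t:ℂ) (memI t ht.1 ht.2)
    rw [hrt] at h
    exact h.comp_ofReal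
  have hmono : StrictMonoOn (fun s : ℝ => (φt (s:ℂ)).re) (Ioo 0 a) := by
    refine strictMonoOn_of_deriv_pos (convex_Ioo 0 a) ?_ ?_
    · intro t ht
      obtain ⟨r, -, h⟩ := hder t ht
      exact (Complex.continuous_re.continuousAt.comp h.continuousAt).continuousWithinAt
    · intro t ht
      rw [interior_Ioo] at ht
      obtain ⟨r, hr, h⟩ := hder t ht
      have h' : HasDerivAt (fun s : ℝ => (φt (s:ℂ)).re) r t := by
        simpa [Function.comp_def] using (Complex.reCLM.hasFDerivAt (x := φt (t:ℂ))).comp_hasDerivAt t h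
      rwa [h'.deriv]
  have hconst : ∀ s ∈ Ioo 0 a, ∀ t ∈ Ioo 0 a, (φt (s:ℂ)).im = (φt (t:ℂ)).im := by
    have hd0 : ∀ t ∈ Ioo 0 a, HasDerivAt (fun s : ℝ => (φt (s:ℂ)).im) 0 t := fun t ht => by
      obtain ⟨r, hr, h⟩ := hder t ht
      simpa [Function.comp_def] using (Complex.imCLM.hasFDerivAt (x := φt (t:ℂ))).comp_hasDerivAt t h
    intro s hs t ht
    exact isOpen_Ioo.is_const_of_deriv_eq_zero isPreconnected_Ioo
      (fun x hx => (hd0 x hx).differentiableAt.differentiableWithinAt)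
      (fun x hx => (hd0 x hx).deriv) hs ht
  have hofReal : ∀ x : ℝ, Tendsto (fun s : ℝ => (s:ℂ)) (𝓝 x) (𝓝 (x:ℂ)) := fun x =>
    Complex.continuous_ofReal.tendsto x
  have hla : Tendsto (fun s : ℝ => φt (s:ℂ)) (𝓝[<] a) (𝓝 0) := by
    refine hbase.comp (tendsto_nhdsWithin_iff.2
      ⟨(hofReal a).mono_left nhdsWithin_le_nhds, ?_⟩)
    filter_upwards [Ioo_mem_nhdsLT ha0] with t ht using memI t ht.1 ht.2
  have hl0 : Tendsto (fun s : ℝ => φt (s:ℂ)) (𝓝[>] 0) (𝓝 φ0) := by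
    refine h0.comp (tendsto_nhdsWithin_iff.2
      ⟨by simpa using (hofReal 0).mono_left nhdsWithin_le_nhds, ?_⟩)
    filter_upwards [Ioo_mem_nhdsGT ha0] with t ht using memI t ht.1 ht.2
  have him : ∀ t ∈ Ioo 0 a, (φt (t:ℂ)).im = 0 := fun t ht => by
    have hl := (Complex.continuous_im.tendsto _).comp hla
    refine tendsto_nhds_unique (tendsto_const_nhds.congr' ?_) hl
    filter_upwards [Ioo_mem_nhdsLT ha0] with s hs using hconst t ht s hs
  have hre : ∀ t ∈ Ioo 0 a, (φt (t:ℂ)).re < 0 := fun t ht => by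
    have hl := (Complex.continuous_re.tendsto _).comp hla
    have hm : (t + a) / 2 ∈ Ioo 0 a := ⟨by linarith [ht.1], by linarith [ht.2]⟩
    have hlt := hmono ht hm (by linarith [ht.2])
    refine lt_of_lt_of_le hlt (ge_of_tendsto hl ?_)
    filter_upwards [Ioo_mem_nhdsLT hm.2] with s hs
    exact (hmono hm ⟨hm.1.trans hs.1, hs.2⟩ hs.1).le
  have hφ0im : φ0.im = 0 := by
    have hl := (Complex.continuous_im.tendsto _).comp hl0
    refine tendsto_nhds_unique hl (tendsto_const_nhds.congr' ?_)
    filter_upwards [Ioo_mem_nhdsGT ha0] with s hs using (him s hs).symm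
  have hφ0re : φ0.re < 0 := by
    have hl := (Complex.continuous_re.tendsto _).comp hl0
    have hm : a / 2 ∈ Ioo 0 a := ⟨by linarith, by linarith⟩
    refine lt_of_le_of_lt (le_of_tendsto hl ?_) (hre _ hm)
    filter_upwards [Ioo_mem_nhdsGT hm.1] with s hs
    exact (hmono ⟨hs.1, hs.2.trans hm.2⟩ hm hs.2).le
  -- Upper side, and the lower side through the reflected function `z ↦ conj (φ̃ (conj z))`.
  obtain ⟨U1, U3, U4, U5, U6⟩ := upper_side hc0 hc1 ha0 hb1 hab h1 h2
    (fun z hz => hderiv z (memU z hz.ne')) hφp hpa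
  obtain ⟨L1, L3, L4, L5, L6⟩ := upper_side hc0 hc1 ha0 hb1 hab h1 h2
    (ψ := (starRingEnd ℂ) ∘ φt ∘ (starRingEnd ℂ)) (p := fun x => (starRingEnd ℂ) (φm x))
    (fun z hz => by
      have h := (hderiv ((starRingEnd ℂ) z) (memU _ (by simpa using hz.ne'))).conj_conj
      rwa [nuFun_conj c a b hz, Complex.conj_conj] at h)
    (fun x => by
      have h := (Complex.continuous_conj.tendsto _).comp (hφm x)
      refine h.congr (fun ε => ?_)
      simp [sub_eq_add_neg])
    (by simp [hma])
  simp only [Complex.conj_re, Complex.conj_im, hm0, hφ0im] at L1 L4 L5 L6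
  rw [hp0, hφ0im] at U1
  refine ⟨fun x hx => ?_, ⟨hφ0im, hφ0re⟩, fun x hx hxa => ⟨him x ⟨hx, hxa⟩, hre x ⟨hx, hxa⟩⟩,
    hbase, ⟨U3, ?_⟩, fun x hax hxb => ?_, fun x hbx hx1 => ?_, fun x hx => ?_⟩
  · have hu := U1 x hx
    have hl := L1 x hx
    exact ⟨hu.1, hl.1, by linarith, by linarith⟩
  · have := congrArg (starRingEnd ℂ) L3
    rw [Complex.conj_conj] at this
    rw [this]; simp
  · have hu := U4 x hax hxb
    have hl := L4 x hax hxb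
    exact ⟨hu.1, hl.1, Complex.arg_eq_neg_pi_div_two_iff.2 hu,
      Complex.arg_eq_pi_div_two_iff.2 ⟨hl.1, by linarith⟩⟩
  · have hu := U5 x hbx hx1
    have hl := L5 x hbx hx1
    exact ⟨hu.1, hl.1, hu.2, by linarith⟩
  · have hu := U6 x hx
    have hl := L6 x hx
    exact ⟨hu.1, hl.1, hu.2, by linarith⟩
end

section
/- For z in the open upper half-plane ℂ₊ one has φ̃(z) = φ(z) + πi(1 − z/c) and φ*(z) = φ(z) + (πi/c)(1 − z); for z in the open lower half-plane ℂ₋ one has φ̃(z) = φ(z) − πi(1 − z/c) and φ*(z) = φ(z) − (πi/c)(1 − z). -/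
/-!
For `0 < t < 1` put `a_t, b_t = (1 ∓ √(1 - t²)) / 2`, and let `R_t` be the branch of
`((z - a_t)(z - b_t))^{1/2}` that behaves like `z` at infinity. The proof computes `g'` without
contour deformation, by writing the equilibrium measure as a mixture of arcsine laws. Indeed
`∫_0^c dt / √(4(s - s²) - t²)`, taken over those `t` with `t² < 4(s - s²)`, equals
`arcsin (c / (2√(s - s²)))` where this quotient is at most `1`, and `π / 2` elsewhere. So `μ(s)` is
`2 / (πc)` times this integral, including the saturated regions where `μ = 1/c`. For fixed `t` the
integrand is, up to a constant, the arcsine density on `[a_t, b_t]`; Fubini's theorem and the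
substitution `s = (1 + √(1 - t²) cos θ) / 2` give `M_mixture`.

The resolvent of an arcsine law is `1 / R_t(z)` (`arcsine_resolvent`, a Cauchy integral after the
Joukowski substitution), and `d/dt [-2 log (t/2 - R_t(z))] = 1 / R_t(z)`. Integrating over
`t ∈ (0, c)` yields `g'(z) = -ν(z) - πi/c` on the upper half-plane (`M_resolvent`, `G_deriv`).

Consequently, if `F' = ν` on the upper half-plane, then `F(z) + g(z) + πiz/c` is constant there.
When `F` tends to `0` at a point `p ∈ [0, 1]`, the constant is the limit of `g(z) + πiz/c` as
`z → p` vertically (`G_tendsto`), namely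
`∫ log|p - s| μ(s) ds + πi ∫_p^1 μ + πip/c`; this is `upper`. For `p = a` and `p = b` the real part
is `l/2` in both cases because `μ` is symmetric about `1/2`, and the masses are
`∫_a^1 μ = 1 - a/c` and `∫_b^1 μ = (1 - b)/c` because `μ` has total mass `1` (`M_mass`) and equals
`1/c` on `(0, a]` and `[b, 1)`. The lower half-plane follows by complex conjugation (`lower`).
-/

open Complex Real Filter Topology Set MeasureTheory

/-! ### Square roots on the upper half-plane -/

lemma sqrt_quadrant {x : ℂ} (hx : 0 < x.im) :
    0 < (x ^ ((1:ℂ)/2)).re ∧ 0 < (x ^ ((1:ℂ)/2)).im := by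
  have h0 : x ≠ 0 := by rintro rfl; simp at hx
  have h1 : 0 < x.arg := by
    rcases lt_or_eq_of_le (Complex.arg_nonneg_iff.2 hx.le) with h | h
    · exact h
    · have := (Complex.arg_eq_zero_iff.1 h.symm).2; linarith
  have h2 : x.arg ≤ π := Complex.arg_le_pi x
  rw [Complex.cpow_def_of_ne_zero h0, Complex.exp_re, Complex.exp_im]
  have e : (Complex.log x * (1/2)).im = x.arg / 2 := by
    have : Complex.log x * (1/2) = Complex.log x / 2 := by ring
    rw [this, Complex.div_ofNat_im, Complex.log_im]
  have h3 : x.arg < π := by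
    rcases lt_or_eq_of_le h2 with h | h
    · exact h
    · have := (Complex.arg_eq_pi_iff.1 h).2; linarith
  rw [e]
  exact ⟨mul_pos (Real.exp_pos _) (Real.cos_pos_of_mem_Ioo ⟨by linarith, by linarith⟩),
    mul_pos (Real.exp_pos _) (Real.sin_pos_of_pos_of_lt_pi (by linarith) (by linarith))⟩

lemma sqrt_sq (x : ℂ) : (x ^ ((1:ℂ)/2)) ^ 2 = x := by
  simp

/-- The principal square root of `z - z² - t²/4 = -(z - a_t)(z - b_t)`, where
`a_t, b_t = (1 ∓ √(1 - t²)) / 2`. On the upper half-plane `R_t = I * S t`, see `root_mul`. -/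
noncomputable def S (t : ℝ) (z : ℂ) : ℂ := (z - z ^ 2 - (t:ℂ) ^ 2 / 4) ^ ((1:ℂ)/2)

/-- On the upper half-plane the product of principal roots, which is the branch behaving like `z` at
infinity, is `I * S t z`: both factors lie in the open first quadrant, so `-I` times their product
has positive real part and is therefore the principal root of its square. -/
lemma root_mul {z : ℂ} (hz : 0 < z.im) {t : ℝ} (ht0 : 0 ≤ t) (ht1 : t ≤ 1) :
    (z - (((1 - √(1 - t ^ 2)) / 2 : ℝ) : ℂ)) ^ ((1:ℂ)/2) *
      (z - (((1 + √(1 - t ^ 2)) / 2 : ℝ) : ℂ)) ^ ((1:ℂ)/2) = I * S t z := by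
  set α : ℝ := (1 - √(1 - t ^ 2)) / 2 with hα
  set β : ℝ := (1 + √(1 - t ^ 2)) / 2 with hβ
  have hs : √(1 - t ^ 2) ^ 2 = 1 - t ^ 2 := Real.sq_sqrt (by nlinarith)
  have hsum : (α:ℂ) + β = 1 := by norm_cast; rw [hα, hβ]; ring
  have hprod : (α:ℂ) * β = (t:ℂ) ^ 2 / 4 := by
    norm_cast; rw [hα, hβ]; linear_combination -hs/4
  obtain ⟨p1, p2⟩ := sqrt_quadrant (x := z - α) (by simpa using hz)
  obtain ⟨q1, q2⟩ := sqrt_quadrant (x := z - β) (by simpa using hz)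
  have hp := sqrt_sq (z - α)
  have hq := sqrt_sq (z - β)
  set p := (z - α) ^ ((1:ℂ)/2)
  set q := (z - β) ^ ((1:ℂ)/2)
  have hre : 0 < (-I * (p * q)).re := by
    simp; nlinarith [mul_pos p1 q2, mul_pos p2 q1]
  have := Complex.sq_cpow_two_inv hre
  have e : (-I * (p * q)) ^ 2 = z - z ^ 2 - (t:ℂ) ^ 2 / 4 := by
    have : (-I * (p * q)) ^ 2 = - (p ^ 2 * q ^ 2) := by ring_nf; simp
    rw [this, hp, hq]; linear_combination z * hsum - hprod
  rw [e] at this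
  rw [S, one_div, this]; ring_nf; simp

lemma mem_slit {z : ℂ} (hz : 0 < z.im) {t : ℝ} (ht : t ^ 2 ≤ 1) :
    z - z ^ 2 - (t:ℂ) ^ 2 / 4 ∈ slitPlane := by
  rw [Complex.mem_slitPlane_iff]
  have e : z - z ^ 2 - (t:ℂ) ^ 2 / 4 = z - z ^ 2 - ((t ^ 2 / 4 : ℝ) : ℂ) := by push_cast; ring
  rw [e]
  by_cases h : z.re = 1 / 2
  · left; simp only [sub_re, ofReal_re, sq, mul_re, h]; nlinarith [mul_pos hz hz]
  · right; simp only [sub_im, ofReal_im, sq, mul_im]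
    intro h'
    have : z.im * (1 - 2 * z.re) = 0 := by linarith
    rcases mul_eq_zero.1 this with h1 | h1
    · exact hz.ne' h1
    · exact h (by linarith)

/-! ### The resolvent of the arcsine law -/

/-- With `u = e^{iθ}` and `κ = (q - p) / (q + p)`, the Joukowski parametrisation factors the
denominator as `h' (u - κ)(1 - κu) / (2κu)`, which turns the integral into a Cauchy integral.
The hypothesis `0 < Re (p q̄)` ensures `|κ| < 1`. -/
lemma arcsine_circle {p q : ℂ} (hpq : 0 < p.re * q.re + p.im * q.im) (hp : p ≠ 0) (hq : q ≠ 0)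
    (h' : ℝ) (hh : 0 < h') (hqp : q ^ 2 - p ^ 2 = 2 * h') :
    ∫ θ in (0:ℝ)..2 * π, 1 / ((p ^ 2 + q ^ 2) / 2 - h' * (Real.cos θ : ℂ)) = 2 * π / (p * q) := by
  have hlt : ‖q - p‖ < ‖q + p‖ := by
    rw [← sq_lt_sq₀ (norm_nonneg _) (norm_nonneg _), Complex.sq_norm, Complex.sq_norm,
      Complex.normSq_apply, Complex.normSq_apply]
    simp; nlinarith
  have hs0 : q + p ≠ 0 := by
    intro h; rw [h, norm_zero] at hlt; exact absurd hlt (not_lt.2 (norm_nonneg _))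
  have hd0 : q - p ≠ 0 := by
    intro h
    have : (2 * h' : ℂ) = 0 := by rw [← hqp]; linear_combination (q + p) * h
    simp [hh.ne'] at this
  set κ : ℂ := (q - p) / (q + p) with hκ
  have hκ1 : ‖κ‖ < 1 := by
    rw [hκ, norm_div, div_lt_one (norm_pos_iff.2 hs0)]; exact hlt
  have hne : ∀ u : ℂ, ‖u‖ ≤ 1 → 1 - κ * u ≠ 0 := by
    intro u hu h
    have : ‖κ * u‖ = 1 := by rw [← sub_eq_zero.1 h, norm_one]
    rw [norm_mul] at this
    nlinarith [norm_nonneg κ, norm_nonneg u]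
  have hC := DifferentiableOn.circleIntegral_sub_inv_smul (R := 1) (c := 0) (w := κ)
    (f := fun u => (1 - κ * u)⁻¹) (by
      intro u hu
      refine DifferentiableAt.differentiableWithinAt ?_
      refine DifferentiableAt.inv (by fun_prop) (hne u (by simpa using hu))) (by simpa using hκ1)
  rw [circleIntegral] at hC
  have hh0 : (h' : ℂ) ≠ 0 := by exact_mod_cast hh.ne'
  have hκκ : (1 - κ * κ)⁻¹ = (q + p) ^ 2 / (4 * p * q) := by
    rw [hκ]
    have : 1 - (q - p) / (q + p) * ((q - p) / (q + p)) = 4 * p * q / (q + p) ^ 2 := by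
      field_simp; ring
    rw [this, inv_div]
  calc _ = ∫ θ in (0:ℝ)..2 * π, (2 * κ / (h' * I)) *
        (deriv (circleMap 0 1) θ • (circleMap 0 1 θ - κ)⁻¹ • (1 - κ * circleMap 0 1 θ)⁻¹) := by
        refine intervalIntegral.integral_congr fun θ _ => ?_
        have hu : circleMap 0 1 θ = Complex.exp (θ * I) := by simp [circleMap]
        simp only [deriv_circleMap, hu, smul_eq_mul, Complex.ofReal_cos, Complex.cos]
        rw [neg_mul, Complex.exp_neg]
        have hu1 : ‖Complex.exp (θ * I)‖ = 1 := Complex.norm_exp_ofReal_mul_I θ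
        have hu0 : Complex.exp (θ * I) ≠ 0 := Complex.exp_ne_zero _
        set u := Complex.exp (θ * I)
        have h1 := hne u hu1.le
        have h2 : u - κ ≠ 0 := by
          intro h; rw [← sub_eq_zero.1 h, hu1] at hκ1; exact lt_irrefl _ hκ1
        have key : ((p ^ 2 + q ^ 2) / 2 - h' * ((u + u⁻¹) / 2)) * (2 * κ * u) =
            h' * ((u - κ) * (1 - κ * u)) := by
          have hk : κ * (p ^ 2 + q ^ 2) = h' * (1 + κ ^ 2) := by
            have : (h':ℂ) = (q ^ 2 - p ^ 2) / 2 := by rw [hqp]; ring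
            rw [this, hκ]; field_simp; ring
          field_simp
          linear_combination u * hk
        have hκ0 : κ ≠ 0 := div_ne_zero hd0 hs0
        have h3 : (p ^ 2 + q ^ 2) / 2 - h' * ((u + u⁻¹) / 2) ≠ 0 := by
          intro h; rw [h, zero_mul] at key
          exact mul_ne_zero hh0 (mul_ne_zero h2 h1) key.symm
        rw [one_div, inv_eq_iff_eq_inv]
        have : (p ^ 2 + q ^ 2) / 2 - h' * ((u + u⁻¹) / 2) =
            h' * ((u - κ) * (1 - κ * u)) / (2 * κ * u) := by
          rw [eq_div_iff (by simp [hκ0, hu0]), key]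
        rw [this]
        change _ = (2 * κ / (h' * I) * (u * I * _))⁻¹
        field_simp
    _ = _ := by
        rw [intervalIntegral.integral_const_mul, hC, smul_eq_mul, hκκ, hκ]
        have : (h':ℂ) = (q ^ 2 - p ^ 2) / 2 := by rw [hqp]; ring
        have e : (h':ℂ) = (q - p) * (q + p) / 2 := by rw [this]; ring
        rw [e]
        field_simp
        norm_num

/-- The resolvent at `z` of the arcsine law on `[a_t, b_t]`, multiplied by `π`, is `π / R_t(z)`. -/
lemma arcsine_resolvent {z : ℂ} (hz : 0 < z.im) {t : ℝ} (ht0 : 0 ≤ t) (ht1 : t < 1) :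
    ∫ θ in (0:ℝ)..π, 1 / (z - (((1 + √(1 - t ^ 2) * Real.cos θ) / 2 : ℝ) : ℂ)) =
      π / (I * S t z) := by
  have hr := root_mul hz ht0 ht1.le
  have hs : 0 < √(1 - t ^ 2) := Real.sqrt_pos.2 (by nlinarith)
  set r := √(1 - t ^ 2)
  obtain ⟨p1, p2⟩ := sqrt_quadrant (x := z - ((1 + r) / 2 : ℝ)) (by simpa using hz)
  obtain ⟨q1, q2⟩ := sqrt_quadrant (x := z - ((1 - r) / 2 : ℝ)) (by simpa using hz)
  have hp := sqrt_sq (z - ((1 + r) / 2 : ℝ))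
  have hq := sqrt_sq (z - ((1 - r) / 2 : ℝ))
  rw [← hr]
  set p := (z - ((1 + r) / 2 : ℝ)) ^ ((1:ℂ)/2)
  set q := (z - ((1 - r) / 2 : ℝ)) ^ ((1:ℂ)/2)
  have hC := arcsine_circle (p := p) (q := q) (by positivity)
    (by intro h; simp [h] at p1) (by intro h; simp [h] at q1) (r / 2) (by positivity)
    (by rw [hp, hq]; push_cast; ring)
  have hden : ∀ θ : ℝ, (p ^ 2 + q ^ 2) / 2 - ((r / 2 : ℝ):ℂ) * (Real.cos θ : ℂ) =
      z - (((1 + r * Real.cos θ) / 2 : ℝ) : ℂ) := by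
    intro θ; rw [hp, hq]; push_cast; ring
  simp only [hden] at hC
  set F : ℝ → ℂ := fun θ => 1 / (z - (((1 + r * Real.cos θ) / 2 : ℝ) : ℂ))
  have hF : Continuous F := by
    refine continuous_const.div (by fun_prop) fun θ h => ?_
    have := congrArg Complex.im h
    simp at this; exact hz.ne' (by simpa using this)
  have h1 := intervalIntegral.integral_add_adjacent_intervals
    (hF.intervalIntegrable (μ := volume) 0 π) (hF.intervalIntegrable π (2 * π))
  have h2 : ∫ θ in π..2 * π, F θ = ∫ θ in (0:ℝ)..π, F θ := by
    have := intervalIntegral.integral_comp_sub_left (a := 0) (b := π) F (2 * π)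
    rw [show 2 * π - π = π by ring, sub_zero] at this
    rw [← this]
    refine intervalIntegral.integral_congr fun θ _ => ?_
    simp only [F, Real.cos_two_pi_sub]
  rw [h2] at h1
  change ∫ θ in (0:ℝ)..π, F θ = _
  have h3 : 2 * ∫ θ in (0:ℝ)..π, F θ = 2 * π / (p * q) := by rw [← hC, ← h1]; ring
  rw [mul_comm q p]
  linear_combination h3 / 2


/-! ### The equilibrium measure as a mixture of arcsine laws -/

/-- The kernel `(4(s - s²) - t²)^{-1/2}` of the mixture. Where `4(s - s²) ≤ t²` the real square root
is `0`, and so is its inverse: the kernel carries the indicator of `(a_t, b_t)`. -/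
noncomputable def W (s t : ℝ) : ℝ := 1 / √(4 * (s - s ^ 2) - t ^ 2)

/-- The equilibrium density on `(0, 1)`. As `Real.arcsin` equals `π / 2` on `[1, ∞)`, the formula also
gives the value `1 / c` outside the interval `(a, b)`. -/
noncomputable def M (c s : ℝ) : ℝ := 2 / (π * c) * Real.arcsin (c / (2 * √(s - s ^ 2)))

lemma W_nonneg (s t : ℝ) : 0 ≤ W s t := by unfold W; positivity

/-- Integrating the kernel in `t` gives the arcsine of the equilibrium density. No case distinction
on the sign of `4(s - s²) - c²` is needed, because `Real.arcsin` is constant on `[1, ∞)`. -/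
lemma W_int {s : ℝ} (hs : s ∈ Ioo (0:ℝ) 1) {c : ℝ} (hc : 0 < c) :
    IntervalIntegrable (W s) volume 0 c ∧
      ∫ t in (0:ℝ)..c, W s t = Real.arcsin (c / (2 * √(s - s ^ 2))) := by
  have hp : 0 < s - s ^ 2 := by nlinarith [hs.1, hs.2]
  have hr : 0 < 2 * √(s - s ^ 2) := by positivity
  have hr2 : (2 * √(s - s ^ 2)) ^ 2 = 4 * (s - s ^ 2) := by
    rw [mul_pow, Real.sq_sqrt hp.le]; ring
  have hW : ∀ t, W s t = 1 / √(1 - (t / (2 * √(s - s ^ 2))) ^ 2) * (1 / (2 * √(s - s ^ 2))) := by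
    intro t
    rw [W, ← hr2]
    generalize 2 * √(s - s ^ 2) = r at hr
    have : r ^ 2 - t ^ 2 = r ^ 2 * (1 - (t / r) ^ 2) := by field_simp
    rw [this, Real.sqrt_mul (by positivity), Real.sqrt_sq hr.le]
    rw [one_div, mul_inv, one_div, one_div, mul_comm]
  set r := 2 * √(s - s ^ 2)
  have hcont : Continuous fun t : ℝ => Real.arcsin (t / r) :=
    Real.continuous_arcsin.comp (continuous_id.div_const r)
  -- Only the right derivative of `arcsin` exists at `1`, where it is `0`, in agreement with the
  -- value `1 / √0 = 0` of the kernel.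
  have hd : ∀ t ∈ Ioo (0:ℝ) c, HasDerivWithinAt (fun t : ℝ => Real.arcsin (t / r)) (W s t)
      (Ioi t) t := by
    intro t ht
    have h1 : t / r ≠ -1 := by
      have : 0 < t / r := div_pos ht.1 hr
      linarith
    have h2 := Real.hasDerivWithinAt_arcsin_Ici h1
    have h3 : HasDerivWithinAt (fun t : ℝ => t / r) (1 / r) (Ioi t) t :=
      ((hasDerivAt_id t).div_const r).hasDerivWithinAt
    rw [hW]
    exact h2.comp t h3 (fun x hx => by
      simp only [mem_Ici]; exact (div_le_div_iff_of_pos_right hr).2 (le_of_lt hx))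
  have hi : IntervalIntegrable (W s) volume 0 c :=
    (intervalIntegrable_iff_integrableOn_Ioc_of_le hc.le).2
      (intervalIntegral.integrableOn_deriv_right_of_nonneg hcont.continuousOn hd
        fun t _ => W_nonneg s t)
  refine ⟨hi, ?_⟩
  rw [intervalIntegral.integral_eq_sub_of_hasDeriv_right_of_le hc.le hcont.continuousOn hd hi]
  simp

lemma M_meas (c : ℝ) : Measurable (M c) := by
  unfold M
  exact (Real.measurable_arcsin.comp (by fun_prop)).const_mul _

lemma M_bound {c : ℝ} (hc : 0 < c) (s : ℝ) : |M c s| ≤ 1 / c := by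
  have h1 : 0 ≤ Real.arcsin (c / (2 * √(s - s ^ 2))) :=
    Real.arcsin_nonneg.2 (by positivity)
  have h2 := Real.arcsin_le_pi_div_two (c / (2 * √(s - s ^ 2)))
  rw [M, abs_of_nonneg (by positivity)]
  calc _ ≤ 2 / (π * c) * (π / 2) := by gcongr
    _ = _ := by field_simp

/-- The kernel is nonnegative with bounded `t`-integrals, hence integrable on `(0, c] × (0, 1]`; this
justifies Fubini's theorem despite the inverse square root singularities. -/
lemma W_prod {c : ℝ} (hc : 0 < c) : Integrable (fun x : ℝ × ℝ => W x.2 x.1)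
    ((volume.restrict (Ioc 0 c)).prod (volume.restrict (Ioc 0 1))) := by
  have hm : Measurable (fun x : ℝ × ℝ => W x.2 x.1) := by unfold W; fun_prop
  rw [integrable_prod_iff' hm.aestronglyMeasurable]
  have hae : ∀ᵐ s ∂(volume.restrict (Ioc (0:ℝ) 1)), s ∈ Ioo (0:ℝ) 1 := by
    rw [← restrict_Ioo_eq_restrict_Ioc]
    exact ae_restrict_mem measurableSet_Ioo
  constructor
  · filter_upwards [hae] with s hs
    exact (intervalIntegrable_iff_integrableOn_Ioc_of_le hc.le).1 (W_int hs hc).1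
  · have : Integrable (fun s => Real.arcsin (c / (2 * √(s - s ^ 2))))
        (volume.restrict (Ioc (0:ℝ) 1)) := by
      refine Integrable.of_bound (C := π / 2)
        (Real.measurable_arcsin.comp (by fun_prop)).aestronglyMeasurable
        (Eventually.of_forall fun s => ?_)
      rw [Real.norm_eq_abs, abs_le]
      exact ⟨Real.neg_pi_div_two_le_arcsin _, Real.arcsin_le_pi_div_two _⟩
    refine this.congr ?_
    filter_upwards [hae] with s hs
    rw [← (W_int hs hc).2, intervalIntegral.integral_of_le hc.le]
    simp only [Real.norm_eq_abs, abs_of_nonneg (W_nonneg _ _)]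

/-- For fixed `t` the kernel is, up to normalisation, the arcsine density on `[a_t, b_t]`. -/
lemma W_slice {t : ℝ} (ht0 : 0 < t) (ht1 : t < 1) (f : ℝ → ℂ) :
    ∫ s in Ioc (0:ℝ) 1, (W s t : ℂ) * f s =
      1 / 2 * ∫ θ in (0:ℝ)..π, f ((1 + √(1 - t ^ 2) * Real.cos θ) / 2) := by
  have hr : 0 < √(1 - t ^ 2) := Real.sqrt_pos.2 (by nlinarith)
  have hr2 : √(1 - t ^ 2) ^ 2 = 1 - t ^ 2 := Real.sq_sqrt (by nlinarith)
  set r := √(1 - t ^ 2)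
  have hr1 : r < 1 := by nlinarith
  have himg : (fun θ => (1 + r * Real.cos θ) / 2) '' Icc 0 π = Icc ((1 - r) / 2) ((1 + r) / 2) := by
    have : (fun θ => (1 + r * Real.cos θ) / 2) = (fun x => (1 + r * x) / 2) ∘ Real.cos := rfl
    rw [this, image_comp, Real.bijOn_cos.image_eq]
    ext x
    simp only [mem_image, mem_Icc]
    constructor
    · rintro ⟨y, ⟨h1, h2⟩, rfl⟩
      constructor <;> nlinarith
    · rintro ⟨h1, h2⟩
      refine ⟨(2 * x - 1) / r, ⟨?_, ?_⟩, by field_simp; ring⟩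
      · rw [le_div_iff₀ hr]; linarith
      · rw [div_le_iff₀ hr]; linarith
  have h1 : ∫ s in Ioc (0:ℝ) 1, (W s t : ℂ) * f s =
      ∫ s in Icc ((1 - r) / 2) ((1 + r) / 2), (W s t : ℂ) * f s := by
    -- Outside `[a_t, b_t]` the kernel vanishes.
    refine (setIntegral_eq_of_subset_of_forall_sdiff_eq_zero measurableSet_Ioc ?_ ?_)
    · intro x hx; exact ⟨by linarith [hx.1], by linarith [hx.2]⟩
    · rintro x ⟨_, hx⟩
      have : 4 * (x - x ^ 2) - t ^ 2 ≤ 0 := by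
        by_contra! h
        apply hx
        have h2 : (2 * x - 1) ^ 2 ≤ r ^ 2 := by rw [hr2]; linarith
        have := abs_le_of_sq_le_sq' h2 hr.le
        exact ⟨by linarith [this.1], by linarith [this.2]⟩
      simp [W, Real.sqrt_eq_zero_of_nonpos this]
  rw [h1, ← himg, integral_image_eq_integral_abs_deriv_smul measurableSet_Icc
    (f' := fun θ => (r * -Real.sin θ) / 2), integral_Icc_eq_integral_Ioo,
    intervalIntegral.integral_of_le Real.pi_pos.le, integral_Ioc_eq_integral_Ioo,
    ← integral_const_mul]
  · refine setIntegral_congr_fun measurableSet_Ioo fun θ hθ => ?_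
    have hsin : 0 < Real.sin θ := Real.sin_pos_of_mem_Ioo hθ
    have e : 4 * ((1 + r * Real.cos θ) / 2 - ((1 + r * Real.cos θ) / 2) ^ 2) - t ^ 2 =
        (r * Real.sin θ) ^ 2 := by
      have := Real.sin_sq_add_cos_sq θ
      linear_combination -hr2 - r ^ 2 * this
    have e2 : |r * -Real.sin θ / 2| = r * Real.sin θ / 2 := by
      rw [show r * -Real.sin θ / 2 = -(r * Real.sin θ / 2) by ring, abs_neg,
        abs_of_pos (by positivity)]
    simp only [W, e, Real.sqrt_sq (mul_pos hr hsin).le, e2]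
    rw [Complex.real_smul]
    have : ((r * Real.sin θ : ℝ) : ℂ) ≠ 0 := by exact_mod_cast (mul_pos hr hsin).ne'
    push_cast at this ⊢
    field_simp
    rw [mul_div_cancel_left₀ _ this]
  · intro θ _
    exact ((((Real.hasDerivAt_cos θ).const_mul r).const_add 1).div_const 2).hasDerivWithinAt
  · intro x hx y hy h
    apply Real.injOn_cos hx hy
    have : r * Real.cos x = r * Real.cos y := by simp only at h; linarith
    exact mul_left_cancel₀ hr.ne' this

/-- The equilibrium measure is a mixture of arcsine laws. -/
lemma M_mixture {c : ℝ} (hc0 : 0 < c) (hc1 : c < 1) {f : ℝ → ℂ} (hf : Continuous f) :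
    ∫ s in (0:ℝ)..1, (M c s : ℂ) * f s = 1 / (π * c) *
      ∫ t in (0:ℝ)..c, ∫ θ in (0:ℝ)..π, f ((1 + √(1 - t ^ 2) * Real.cos θ) / 2) := by
  obtain ⟨C, hC⟩ := isCompact_Icc.exists_bound_of_continuousOn (s := Icc (0:ℝ) 1) hf.continuousOn
  have hint : Integrable (Function.uncurry fun t s : ℝ => (W s t : ℂ) * f s)
      ((volume.restrict (Ioc 0 c)).prod (volume.restrict (Ioc 0 1))) := by
    refine Integrable.mul_bdd (c := C) (W_prod hc0).ofReal
      (hf.comp continuous_snd).aestronglyMeasurable ?_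
    rw [Measure.prod_restrict]
    filter_upwards [ae_restrict_mem (measurableSet_Ioc.prod measurableSet_Ioc)] with x hx
    exact hC _ ⟨hx.2.1.le, hx.2.2⟩
  have hswap := integral_integral_swap hint
  rw [intervalIntegral.integral_of_le zero_le_one, intervalIntegral.integral_of_le hc0.le]
  have hL : ∫ t in Ioc (0:ℝ) c, ∫ s in Ioc (0:ℝ) 1, (W s t : ℂ) * f s =
      1 / 2 * ∫ t in Ioc (0:ℝ) c, ∫ θ in (0:ℝ)..π, f ((1 + √(1 - t ^ 2) * Real.cos θ) / 2) := by
    rw [← integral_const_mul]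
    exact setIntegral_congr_fun measurableSet_Ioc fun t ht => W_slice ht.1 (ht.2.trans_lt hc1) f
  have hR : ∫ s in Ioc (0:ℝ) 1, (M c s : ℂ) * f s =
      2 / (π * c) * ∫ s in Ioc (0:ℝ) 1, ∫ t in Ioc (0:ℝ) c, (W s t : ℂ) * f s := by
    rw [← integral_const_mul, integral_Ioc_eq_integral_Ioo, integral_Ioc_eq_integral_Ioo]
    refine setIntegral_congr_fun measurableSet_Ioo fun s hs => ?_
    rw [integral_mul_const, integral_complex_ofReal, ← intervalIntegral.integral_of_le hc0.le,
      (W_int hs hc0).2, M]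
    push_cast; ring
  rw [hR, ← hswap, hL]; ring

lemma M_mass {c : ℝ} (hc0 : 0 < c) (hc1 : c < 1) : ∫ s in (0:ℝ)..1, M c s = 1 := by
  have := M_mixture hc0 hc1 (f := fun _ => 1) continuous_const
  simp only [mul_one, intervalIntegral.integral_const, intervalIntegral.integral_ofReal] at this
  have hπ : (π:ℂ) ≠ 0 := by exact_mod_cast Real.pi_ne_zero
  have hc : (c:ℂ) ≠ 0 := by exact_mod_cast hc0.ne'
  have h : ((∫ s in (0:ℝ)..1, M c s : ℝ) : ℂ) = 1 := by
    rw [this]; simp; field_simp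
  exact_mod_cast h


/-! ### The derivative of the logarithmic potential -/

/-- The function `ν` on the upper half-plane, with `((z - a)(z - b))^{1/2}` written as
`I * S c z`. -/
noncomputable def nuC (c : ℝ) (z : ℂ) : ℂ :=
  (2 / (c:ℂ)) * Complex.log ((c:ℂ) / 2 - I * S c z) - (1 / (c:ℂ)) * Complex.log (z - z ^ 2)

/-- The logarithmic potential `g` of the density `M c`. -/
noncomputable def G (c : ℝ) (z : ℂ) : ℂ := ∫ s in (0:ℝ)..1, (M c s : ℂ) * Complex.log (z - s)

lemma sqrt_re_pos {x : ℂ} (hx : x ∈ slitPlane) : 0 < (x ^ ((1:ℂ)/2)).re := by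
  have h0 : x ≠ 0 := slitPlane_ne_zero hx
  have h3 : x.arg < π := lt_of_le_of_ne (Complex.arg_le_pi x) (mem_slitPlane_iff_arg.1 hx).1
  have h4 := Complex.neg_pi_lt_arg x
  rw [Complex.cpow_def_of_ne_zero h0, Complex.exp_re]
  have e : (Complex.log x * (1/2)).im = x.arg / 2 := by
    have : Complex.log x * (1/2) = Complex.log x / 2 := by ring
    rw [this, Complex.div_ofNat_im, Complex.log_im]
  rw [e]
  exact mul_pos (Real.exp_pos _) (Real.cos_pos_of_mem_Ioo ⟨by linarith, by linarith⟩)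

/-- For `x = z - z²` this is the value of `log (t/2 - R_t(z))` at `t = 0`. -/
lemma log_neg_I_sqrt {x : ℂ} (hx : x ≠ 0) :
    Complex.log (-(I * x ^ ((1:ℂ)/2))) = Complex.log x / 2 - π / 2 * I := by
  have h1 := Complex.arg_le_pi x
  have h4 := Complex.neg_pi_lt_arg x
  have e : -(I * x ^ ((1:ℂ)/2)) = Complex.exp (Complex.log x / 2 - π / 2 * I) := by
    rw [Complex.cpow_def_of_ne_zero hx, sub_eq_add_neg, Complex.exp_add,
      show -((π:ℂ) / 2 * I) = -π / 2 * I by ring, Complex.exp_neg_pi_div_two_mul_I,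
      show Complex.log x * (1 / 2) = Complex.log x / 2 by ring]
    ring
  have him : (Complex.log x / 2 - π / 2 * I).im = x.arg / 2 - π / 2 := by
    have : (π:ℂ) / 2 * I = ((π / 2 : ℝ):ℂ) * I := by push_cast; ring
    rw [this, Complex.sub_im, Complex.div_ofNat_im, Complex.log_im, Complex.im_ofReal_mul]
    simp
  rw [e, Complex.log_exp] <;> rw [him] <;> linarith [Real.pi_pos]

/-- The formula `d/dt [-2 log (t/2 - R_t(z))] = 1 / R_t(z)` for the `t`-integral of the arcsine
resolvents. -/
lemma hasDerivAt_log_root {z : ℂ} (hz : 0 < z.im) {t : ℝ} (ht : t ^ 2 ≤ 1) :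
    HasDerivAt (fun t : ℝ => -2 * Complex.log ((t:ℂ) / 2 - I * S t z)) (1 / (I * S t z)) t := by
  have hm := mem_slit hz ht
  have hre : 0 < (S t z).re := sqrt_re_pos hm
  have hS0 : S t z ≠ 0 := by intro h; simp [h] at hre
  have hd : HasDerivAt (fun τ : ℂ => (z - z ^ 2 - τ ^ 2 / 4) ^ ((1:ℂ)/2))
      (-(t:ℂ) / (4 * S t z)) (t:ℂ) := by
    have h1 : HasDerivAt (fun τ : ℂ => z - z ^ 2 - τ ^ 2 / 4) (-((2 * t : ℂ) / 4)) (t:ℂ) := by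
      simpa using ((hasDerivAt_pow 2 (t:ℂ)).div_const 4).const_sub (z - z ^ 2)
    have h2 := h1.cpow_const (c := (1:ℂ)/2) hm
    convert h2 using 1
    rw [Complex.cpow_sub _ _ (slitPlane_ne_zero hm), Complex.cpow_one]
    have := sqrt_sq (z - z ^ 2 - (t:ℂ) ^ 2 / 4)
    change S t z ^ 2 = _ at this
    rw [show (z - z ^ 2 - (t:ℂ) ^ 2 / 4) ^ ((1:ℂ)/2) = S t z from rfl, ← this]
    field_simp
  have him : ((t:ℂ) / 2 - I * S t z) ∈ slitPlane := by
    rw [mem_slitPlane_iff]; right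
    simp; exact hre.ne'
  have h3 : HasDerivAt (fun τ : ℂ => τ / 2 - I * (z - z ^ 2 - τ ^ 2 / 4) ^ ((1:ℂ)/2))
      (1 / 2 - I * (-(t:ℂ) / (4 * S t z))) (t:ℂ) :=
    ((hasDerivAt_id _).div_const 2).sub (hd.const_mul I)
  have h4 : HasDerivAt (fun t : ℝ => -2 * Complex.log ((t:ℂ) / 2 - I * S t z)) _ t :=
    ((h3.clog him).const_mul (-2)).comp_ofReal
  refine h4.congr_deriv (Eq.symm ?_)
  change _ = -2 * ((1 / 2 - I * (-(t:ℂ) / (4 * S t z))) / ((t:ℂ) / 2 - I * S t z))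
  have h5 := slitPlane_ne_zero him
  have h6 : (t:ℂ) - 2 * (I * S t z) ≠ 0 := by
    intro h; apply h5; linear_combination h / 2
  have h7 : (1 / 2 - I * (-(t:ℂ) / (4 * S t z))) = I * ((t:ℂ) / 2 - I * S t z) / (2 * S t z) := by
    field_simp; ring_nf; simp
  rw [h7, one_div, mul_inv, inv_I]
  generalize (t:ℂ) / 2 - I * S t z = X at h5
  field_simp

/-- The Stieltjes transform of the equilibrium measure, `g' = -ν - πi/c`, on the upper half-plane. -/
lemma M_resolvent {c : ℝ} (hc0 : 0 < c) (hc1 : c < 1) {z : ℂ} (hz : 0 < z.im) :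
    ∫ s in (0:ℝ)..1, (M c s : ℂ) * (1 / (z - s)) = -nuC c z - π * I / c := by
  have hcont : Continuous fun s : ℝ => 1 / (z - (s:ℂ)) := by
    refine continuous_const.div (by fun_prop) fun s h => ?_
    have := congrArg Complex.im h
    simp at this; exact hz.ne' this
  rw [M_mixture hc0 hc1 hcont]
  have h1 : ∫ t in (0:ℝ)..c, ∫ θ in (0:ℝ)..π,
      1 / (z - (((1 + √(1 - t ^ 2) * Real.cos θ) / 2 : ℝ) : ℂ)) =
      ∫ t in (0:ℝ)..c, π * (1 / (I * S t z)) := by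
    refine intervalIntegral.integral_congr fun t ht => ?_
    rw [uIcc_of_le hc0.le] at ht
    rw [arcsine_resolvent hz ht.1 (ht.2.trans_lt hc1)]; ring
  have hsq : ∀ t ∈ uIcc 0 c, t ^ 2 ≤ 1 := fun t ht => by
    rw [uIcc_of_le hc0.le] at ht; nlinarith [ht.1, ht.2]
  have h2 : ∫ t in (0:ℝ)..c, 1 / (I * S t z) = _ :=
    intervalIntegral.integral_eq_sub_of_hasDerivAt
      (fun t ht => hasDerivAt_log_root hz (hsq t ht)) (by
        apply ContinuousOn.intervalIntegrable
        intro t ht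
        have hm := mem_slit hz (hsq t ht)
        have hre : 0 < (S t z).re := sqrt_re_pos hm
        have hS0 : S t z ≠ 0 := by intro h; simp [h] at hre
        refine ContinuousAt.continuousWithinAt ?_
        refine continuousAt_const.div (continuousAt_const.mul ?_) (mul_ne_zero I_ne_zero hS0)
        unfold S
        exact ContinuousAt.cpow (by fun_prop) continuousAt_const hm)
  have h3 : Complex.log (((0:ℝ):ℂ) / 2 - I * S 0 z) = Complex.log (z - z ^ 2) / 2 - π / 2 * I := by
    have hm := mem_slit hz (t := 0) (by norm_num)
    have := log_neg_I_sqrt (slitPlane_ne_zero hm)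
    simp only [S]
    rw [← show z - z ^ 2 - ((0:ℝ):ℂ) ^ 2 / 4 = z - z ^ 2 by simp, ← this]
    simp
  rw [h1, intervalIntegral.integral_const_mul, h2, h3, nuC]
  have hπ : (π:ℂ) ≠ 0 := by exact_mod_cast Real.pi_ne_zero
  have hc : (c:ℂ) ≠ 0 := by exact_mod_cast hc0.ne'
  field_simp
  ring

lemma ii_ofReal {f : ℝ → ℝ} {x y : ℝ} (h : IntervalIntegrable f volume x y) :
    IntervalIntegrable (fun s => (f s : ℂ)) volume x y := ⟨h.1.ofReal, h.2.ofReal⟩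

lemma M_ii {c : ℝ} (hc : 0 < c) (x y : ℝ) : IntervalIntegrable (M c) volume x y := by
  refine (intervalIntegrable_const (c := 1 / c)).mono_fun (M_meas c).aestronglyMeasurable
    (Eventually.of_forall fun s => ?_)
  change |M c s| ≤ |1 / c|
  rw [abs_of_pos (by positivity : 0 < 1 / c)]
  exact M_bound hc s

lemma G_deriv {c : ℝ} (hc0 : 0 < c) (hc1 : c < 1) {z : ℂ} (hz : 0 < z.im) :
    HasDerivAt (G c) (-nuC c z - π * I / c) z := by
  rw [← M_resolvent hc0 hc1 hz]
  have hopen : IsOpen {x : ℂ | z.im / 2 < x.im} := isOpen_lt continuous_const Complex.continuous_im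
  have hslit : ∀ x : ℂ, 0 < x.im → ∀ s : ℝ, x - s ∈ slitPlane := fun x hx s => by
    rw [mem_slitPlane_iff]; right; simpa using hx.ne'
  refine (intervalIntegral.hasDerivAt_integral_of_dominated_loc_of_deriv_le
    (F' := fun x s => (M c s : ℂ) * (1 / (x - s)))
    (bound := fun _ => 1 / c * (2 / z.im))
    (hopen.mem_nhds (show z.im / 2 < z.im by linarith)) ?_ ?_ ?_ ?_ ?_ ?_).2
  · refine Eventually.of_forall fun x => Measurable.aestronglyMeasurable ?_
    have := M_meas c
    fun_prop
  · have : IntervalIntegrable (fun s => (M c s : ℂ)) volume 0 1 := ii_ofReal (M_ii hc0 0 1)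
    refine this.mul_continuousOn ?_
    exact ContinuousOn.clog (by fun_prop) fun s _ => hslit z hz s
  · refine Measurable.aestronglyMeasurable ?_
    have := M_meas c
    fun_prop
  · refine Eventually.of_forall fun s _ x hx => ?_
    have hx' : z.im / 2 < x.im := hx
    rw [norm_mul, norm_div, norm_one, Complex.norm_real, Real.norm_eq_abs]
    refine mul_le_mul (M_bound hc0 s) ?_ (by positivity) (by positivity)
    · have h1 : |x.im| ≤ ‖x - s‖ := by simpa using Complex.abs_im_le_norm (x - s)
      rw [abs_of_pos (by linarith)] at h1
      rw [show 2 / z.im = 1 / (z.im / 2) by field_simp]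
      exact one_div_le_one_div_of_le (by linarith) (by linarith)
  · exact intervalIntegrable_const
  · refine Eventually.of_forall fun s _ x hx => ?_
    have hx' : z.im / 2 < x.im := hx
    exact (((hasDerivAt_id x).sub_const (s:ℂ)).clog (hslit x (by linarith) s)).const_mul _

lemma logM_ii {c : ℝ} (hc : 0 < c) (p x y : ℝ) :
    IntervalIntegrable (fun s => Real.log |p - s| * M c s) volume x y := by
  have h1 : IntervalIntegrable (fun s => Real.log (p - s)) volume x y := by
    have := (intervalIntegral.intervalIntegrable_log' (a := p - x) (b := p - y)).comp_sub_left p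
    simpa using this
  simp only [Real.log_abs]
  rw [intervalIntegrable_iff] at h1 ⊢
  exact h1.mul_bdd (c := 1 / c) (M_meas c).aestronglyMeasurable
    (Eventually.of_forall fun s => M_bound hc s)

/-! ### Boundary values and the constant of integration -/

/-- At a real argument `Complex.log` takes its boundary values from the upper half-plane, so each
`s > p` contributes `πi`. -/
lemma log_boundary {c : ℝ} (hc : 0 < c) {p : ℝ} (hp0 : 0 ≤ p) (hp1 : p ≤ 1) :
    ∫ s in (0:ℝ)..1, (M c s : ℂ) * Complex.log ((p - s : ℝ) : ℂ) =
      ((∫ s in (0:ℝ)..1, Real.log |p - s| * M c s : ℝ) : ℂ) +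
        π * I * ((∫ s in p..1, M c s : ℝ) : ℂ) := by
  have hL : ∀ x y, IntervalIntegrable (fun s => ((Real.log |p - s| * M c s : ℝ) : ℂ)) volume x y :=
    fun x y => ii_ofReal (logM_ii hc p x y)
  have hM : IntervalIntegrable (fun s => (π * I : ℂ) * (M c s : ℂ)) volume p 1 :=
    (ii_ofReal (M_ii hc p 1)).const_mul _
  have e1 : ∀ s ≤ p, (M c s : ℂ) * Complex.log ((p - s : ℝ) : ℂ) =
      ((Real.log |p - s| * M c s : ℝ) : ℂ) := fun s hs => by
    rw [← Complex.ofReal_log (by linarith), Real.log_abs]; push_cast; ring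
  have e2 : ∀ s, p < s → (M c s : ℂ) * Complex.log ((p - s : ℝ) : ℂ) =
      ((Real.log |p - s| * M c s : ℝ) : ℂ) + π * I * (M c s : ℂ) := fun s hs => by
    rw [Complex.log, Complex.arg_ofReal_of_neg (by linarith), Complex.norm_real, Real.norm_eq_abs]
    push_cast; ring
  have i1 : ∫ s in (0:ℝ)..p, (M c s : ℂ) * Complex.log ((p - s : ℝ) : ℂ) =
      ∫ s in (0:ℝ)..p, ((Real.log |p - s| * M c s : ℝ) : ℂ) := by
    refine intervalIntegral.integral_congr fun s hs => ?_
    rw [uIcc_of_le hp0] at hs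
    exact e1 s hs.2
  have hae : ∀ᵐ s, s ∈ Set.uIoc p 1 → (M c s : ℂ) * Complex.log ((p - s : ℝ) : ℂ) =
      ((Real.log |p - s| * M c s : ℝ) : ℂ) + π * I * (M c s : ℂ) :=
    Eventually.of_forall fun s hs => by
      rw [uIoc_of_le hp1] at hs; exact e2 s hs.1
  have i2 : ∫ s in p..1, (M c s : ℂ) * Complex.log ((p - s : ℝ) : ℂ) =
      (∫ s in p..1, ((Real.log |p - s| * M c s : ℝ) : ℂ)) +
        π * I * ((∫ s in p..1, M c s : ℝ) : ℂ) := by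
    rw [intervalIntegral.integral_congr_ae hae, intervalIntegral.integral_add (hL _ _) hM,
      intervalIntegral.integral_const_mul, intervalIntegral.integral_ofReal,
      intervalIntegral.integral_ofReal]
  have j1 : IntervalIntegrable (fun s => (M c s : ℂ) * Complex.log ((p - s : ℝ) : ℂ))
      volume 0 p := by
    refine (hL 0 p).congr fun s hs => ?_
    rw [uIoc_of_le hp0] at hs
    exact (e1 s hs.2).symm
  have j2 : IntervalIntegrable (fun s => (M c s : ℂ) * Complex.log ((p - s : ℝ) : ℂ))
      volume p 1 := by
    refine ((hL p 1).add hM).congr fun s hs => ?_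
    rw [uIoc_of_le hp1] at hs
    exact (e2 s hs.1).symm
  rw [← intervalIntegral.integral_add_adjacent_intervals j1 j2, i1, i2, ← add_assoc,
    intervalIntegral.integral_add_adjacent_intervals (hL _ _) (hL _ _),
    intervalIntegral.integral_ofReal]

/-- Boundary values of the potential at `p ∈ [0, 1]`, along the vertical line from above. The integrand
is dominated by means of `|p - s| ≤ |p + iy - s| ≤ 2`. -/
lemma G_tendsto {c : ℝ} (hc : 0 < c) {p : ℝ} (hp0 : 0 ≤ p) (hp1 : p ≤ 1) :
    Tendsto (fun y : ℝ => G c (p + y * I)) (𝓝[>] 0)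
      (𝓝 (((∫ s in (0:ℝ)..1, Real.log |p - s| * M c s : ℝ) : ℂ) +
        π * I * ((∫ s in p..1, M c s : ℝ) : ℂ))) := by
  rw [← log_boundary hc hp0 hp1]
  unfold G
  have hp : ∀ᵐ s : ℝ, s ≠ p := by simp [ae_iff, measure_singleton]
  have hy1 : ∀ᶠ y : ℝ in 𝓝[>] 0, y ∈ Ioo (0:ℝ) 1 := Ioo_mem_nhdsGT zero_lt_one
  refine intervalIntegral.tendsto_integral_filter_of_dominated_convergence
    (fun s => 1 / c * (|Real.log (|p - s|)| + Real.log 2 + π)) ?_ ?_ ?_ ?_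
  · refine Eventually.of_forall fun x => Measurable.aestronglyMeasurable ?_
    have := M_meas c
    fun_prop
  · filter_upwards [hy1] with y hy
    filter_upwards [hp] with s hs hs'
    rw [uIoc_of_le zero_le_one] at hs'
    rw [norm_mul, Complex.norm_real]
    gcongr
    · exact M_bound hc s
    set w : ℂ := p + y * I - s with hw
    have hre : w.re = p - s := by simp [hw]
    have him : w.im = y := by simp [hw]
    have h1 : |p - s| ≤ ‖w‖ := hre ▸ Complex.abs_re_le_norm w
    have h2 : ‖w‖ ≤ 2 := by
      refine (Complex.norm_le_abs_re_add_abs_im w).trans ?_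
      rw [hre, him, abs_of_pos hy.1]
      have : |p - s| ≤ 1 := abs_le.2 ⟨by linarith [hs'.2], by linarith [hs'.1]⟩
      linarith [hy.2]
    have h0 : 0 < |p - s| := abs_pos.2 (sub_ne_zero.2 hs.symm)
    have h3 := Real.log_le_log h0 h1
    have h4 := Real.log_le_log (h0.trans_le h1) h2
    have h5 := neg_abs_le (Real.log |p - s|)
    have h6 := Real.log_nonneg (show (1:ℝ) ≤ 2 by norm_num)
    have h7 := abs_nonneg (Real.log |p - s|)
    refine (Complex.norm_le_abs_re_add_abs_im _).trans ?_
    rw [Complex.log_re, Complex.log_im]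
    exact add_le_add (abs_le.2 ⟨by linarith, by linarith⟩) (Complex.abs_arg_le_pi w)
  · have h1 : IntervalIntegrable (fun s => Real.log (p - s)) volume 0 1 := by
      have := (intervalIntegral.intervalIntegrable_log' (a := p - 0) (b := p - 1)).comp_sub_left p
      simpa using this
    simp only [Real.log_abs]
    exact ((h1.abs.add intervalIntegrable_const).add intervalIntegrable_const).const_mul _
  · filter_upwards [hp] with s hs _
    refine Tendsto.const_mul _ ?_
    have hpath : Tendsto (fun y : ℝ => (p + y * I - s : ℂ)) (𝓝[>] 0) (𝓝 ((p - s : ℝ) : ℂ)) := by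
      have : Continuous fun y : ℝ => (p + y * I - s : ℂ) := by fun_prop
      refine (this.tendsto' 0 _ (by simp)).mono_left nhdsWithin_le_nhds
    rcases lt_or_gt_of_ne hs with h | h
    · have : ContinuousAt Complex.log ((p - s : ℝ) : ℂ) :=
        continuousAt_clog (by rw [mem_slitPlane_iff]; left; simpa using h)
      exact this.tendsto.comp hpath
    -- On the negative axis the logarithm is continuous only from the closed upper half-plane.
    · have := Complex.continuousWithinAt_log_of_re_neg_of_im_zero (z := ((p - s : ℝ) : ℂ))
        (by rw [Complex.ofReal_re]; linarith) (Complex.ofReal_im _)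
      refine this.tendsto.comp (tendsto_nhdsWithin_iff.2 ⟨hpath, ?_⟩)
      filter_upwards [hy1] with y hy
      simp [hy.1.le]

/-- Any antiderivative of `ν` on the upper half-plane which tends to `0` at `p ∈ [0, 1]` from above,
in terms of the potential: `F + G c + πiz/c` has derivative zero, and its value is found at `p`. -/
lemma upper {c : ℝ} (hc0 : 0 < c) (hc1 : c < 1) {F : ℂ → ℂ}
    (hF : ∀ z : ℂ, 0 < z.im → HasDerivAt F (nuC c z) z) {p : ℝ} (hp0 : 0 ≤ p) (hp1 : p ≤ 1)
    (hlim : Tendsto (fun y : ℝ => F (p + y * I)) (𝓝[>] 0) (𝓝 0)) {z : ℂ} (hz : 0 < z.im) :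
    F z = ((∫ s in (0:ℝ)..1, Real.log |p - s| * M c s : ℝ) : ℂ) - G c z +
      π * I * (((∫ s in p..1, M c s : ℝ) : ℂ) + (p - z) / c) := by
  set H : ℂ → ℂ := fun z => F z + G c z + π * I / c * z with hH
  have hd : ∀ w : ℂ, 0 < w.im → HasDerivAt H 0 w := fun w hw => by
    have := ((hF w hw).add (G_deriv hc0 hc1 hw)).add ((hasDerivAt_id w).const_mul (π * I / c : ℂ))
    exact this.congr_deriv (by ring)
  have hopen : IsOpen {x : ℂ | 0 < x.im} := isOpen_lt continuous_const Complex.continuous_im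
  have hconst : ∀ w : ℂ, 0 < w.im → H w = H z := fun w hw =>
    hopen.is_const_of_deriv_eq_zero (convex_halfSpace_im_gt 0).isPreconnected
      (fun x hx => (hd x hx).differentiableAt.differentiableWithinAt)
      (fun x hx => (hd x hx).deriv) hw hz
  have hpath : Tendsto (fun y : ℝ => (π * I / c * (p + y * I) : ℂ)) (𝓝[>] 0)
      (𝓝 (π * I / c * p)) := by
    have : Continuous fun y : ℝ => (π * I / c * (p + y * I) : ℂ) := by fun_prop
    exact (this.tendsto' 0 _ (by simp)).mono_left nhdsWithin_le_nhds
  have hl := (hlim.add (G_tendsto hc0 hp0 hp1)).add hpath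
  have hl2 : Tendsto (fun y : ℝ => H (p + y * I)) (𝓝[>] 0) (𝓝 (H z)) := by
    refine tendsto_const_nhds.congr' ?_
    filter_upwards [self_mem_nhdsWithin] with y hy
    exact (hconst _ (by simpa using hy)).symm
  have := tendsto_nhds_unique hl2 hl
  simp only [hH] at this
  linear_combination this


/-! ### Conjugation and the lower half-plane -/

/-- The function `ν` with arbitrary branch points `a`, `b`. The product of principal roots is the
required branch of `((z - a)(z - b))^{1/2}` off the real axis. -/
noncomputable def nuR (a b c : ℝ) (z : ℂ) : ℂ :=
  (2/(c:ℂ)) * Complex.log ((c:ℂ)/2 - (z - (a:ℂ)) ^ ((1:ℂ)/2) * (z - (b:ℂ)) ^ ((1:ℂ)/2))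
        - (1/(c:ℂ)) * Complex.log (z - z ^ 2)

lemma M_eq_out {c x : ℝ} (hc : 0 < c) (hx0 : 0 < x) (hx1 : x < 1) (h : 4 * (x - x ^ 2) ≤ c ^ 2) :
    M c x = 1 / c := by
  have hp : 0 < x - x ^ 2 := by nlinarith
  have hr : 0 < √(x - x ^ 2) := Real.sqrt_pos.2 hp
  have h1 : 1 ≤ c / (2 * √(x - x ^ 2)) := by
    rw [le_div_iff₀ (by positivity), one_mul]
    have h2 : (2 * √(x - x ^ 2)) ^ 2 ≤ c ^ 2 := by
      rw [mul_pow, Real.sq_sqrt hp.le]; linarith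
    exact (abs_le_of_sq_le_sq' h2 hc.le).2
  rw [M, Real.arcsin_of_one_le h1]
  have := Real.pi_pos
  field_simp

lemma M_symm (c s : ℝ) : M c (1 - s) = M c s := by
  rw [M, M, show 1 - s - (1 - s) ^ 2 = s - s ^ 2 by ring]

lemma G_conj (c : ℝ) {z : ℂ} (hz : z.im ≠ 0) :
    (starRingEnd ℂ) (G c ((starRingEnd ℂ) z)) = G c z := by
  rw [G, G, ← intervalIntegral.intervalIntegral_conj]
  refine intervalIntegral.integral_congr fun s _ => ?_
  simp only [map_mul, Complex.conj_ofReal]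
  rw [← Complex.log_conj]
  · simp
  · intro h
    have := (Complex.arg_eq_pi_iff.1 h).2
    simp at this; exact hz this

lemma nuR_eq {a b c : ℝ} (hc0 : 0 < c) (hc1 : c < 1) (ha : a = (1 - √(1 - c ^ 2)) / 2)
    (hb : b = (1 + √(1 - c ^ 2)) / 2) {z : ℂ} (hz : 0 < z.im) : nuR a b c z = nuC c z := by
  rw [nuR, nuC, ha, hb, root_mul hz hc0.le hc1.le]

lemma arg_ne_of_slit {x : ℂ} (h : x ∈ slitPlane) : x.arg ≠ π := (mem_slitPlane_iff_arg.1 h).1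

/-- Schwarz reflection for `ν`. No logarithm or root has its argument on the negative real axis, so
conjugation commutes with each of them. -/
lemma nuR_conj {a b c : ℝ} (hc0 : 0 < c) (hc1 : c < 1) (ha : a = (1 - √(1 - c ^ 2)) / 2)
    (hb : b = (1 + √(1 - c ^ 2)) / 2) {z : ℂ} (hz : 0 < z.im) :
    (starRingEnd ℂ) (nuR a b c ((starRingEnd ℂ) z)) = nuC c z := by
  rw [← nuR_eq hc0 hc1 ha hb hz]
  have h1 : ∀ x : ℝ, (((starRingEnd ℂ) z) - (x:ℂ)) ^ ((1:ℂ)/2) =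
      (starRingEnd ℂ) ((z - x) ^ ((1:ℂ)/2)) := fun x => by
    have e : ((starRingEnd ℂ) z) - (x:ℂ) = (starRingEnd ℂ) (z - x) := by simp
    rw [e, Complex.conj_cpow _ _ (arg_ne_of_slit (mem_slitPlane_iff.2 (Or.inr (by
      simpa using hz.ne'))))]
    congr 2
    rw [map_div₀, map_one, map_ofNat]
  have h2 : Complex.log ((starRingEnd ℂ) z - (starRingEnd ℂ) z ^ 2) =
      (starRingEnd ℂ) (Complex.log (z - z ^ 2)) := by
    have := mem_slit hz (t := 0) (by norm_num)
    rw [← Complex.log_conj _ (arg_ne_of_slit (by simpa using this))]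
    simp
  have h3 : ((c:ℂ)/2 - (z - (a:ℂ)) ^ ((1:ℂ)/2) * (z - (b:ℂ)) ^ ((1:ℂ)/2)) ∈ slitPlane := by
    rw [ha, hb, root_mul hz hc0.le hc1.le]
    have hre : 0 < (S c z).re := sqrt_re_pos (mem_slit hz (by nlinarith))
    rw [mem_slitPlane_iff]; right
    simp; exact hre.ne'
  have h4 := Complex.log_conj _ (arg_ne_of_slit h3)
  simp only [map_sub, map_mul, map_div₀, Complex.conj_ofReal, map_ofNat] at h4
  rw [nuR, nuR, h1, h1, h2, h4]
  simp only [map_sub, map_mul, map_div₀, Complex.conj_conj, Complex.conj_ofReal, map_ofNat, map_one]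

/-- The analogue of `upper` on the lower half-plane, obtained from it for `z ↦ conj (F (conj z))`. -/
lemma lower {a b c : ℝ} (hc0 : 0 < c) (hc1 : c < 1) (ha : a = (1 - √(1 - c ^ 2)) / 2)
    (hb : b = (1 + √(1 - c ^ 2)) / 2) {F : ℂ → ℂ}
    (hF : ∀ z : ℂ, z.im < 0 → HasDerivAt F (nuR a b c z) z) {p : ℝ} (hp0 : 0 ≤ p) (hp1 : p ≤ 1)
    (hlim : Tendsto (fun y : ℝ => F (p - y * I)) (𝓝[>] 0) (𝓝 0)) {z : ℂ} (hz : z.im < 0) :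
    F z = ((∫ s in (0:ℝ)..1, Real.log |p - s| * M c s : ℝ) : ℂ) - G c z -
      π * I * (((∫ s in p..1, M c s : ℝ) : ℂ) + (p - z) / c) := by
  have hup := upper hc0 hc1 (F := fun w => (starRingEnd ℂ) (F ((starRingEnd ℂ) w))) (p := p)
    (fun w hw => by
      rw [← nuR_conj hc0 hc1 ha hb hw]
      have := (hF ((starRingEnd ℂ) w) (by simpa using hw)).conj_conj
      simpa [Function.comp_def] using this) hp0 hp1 (by
      have := (Complex.continuous_conj.tendsto 0).comp hlim
      simpa [Function.comp_def, sub_eq_add_neg] using this) (z := (starRingEnd ℂ) z)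
      (by simpa using hz)
  have := congrArg (starRingEnd ℂ) hup
  rw [map_add, map_sub, G_conj c hz.ne] at this
  simp only [Complex.conj_conj, Complex.conj_ofReal, map_mul, map_add, map_sub, map_div₀,
    Complex.conj_I] at this
  rw [this]; ring

/-! ### The connection formulas -/

/-- connection formulas `φ̃(z) = φ(z) ± πi(1 − z/c)` and
`φ*(z) = φ(z) ± (πi/c)(1 − z)` for `z` in the open upper/lower half-plane,
where `φ = l/2 − g` and `φ̃, φ*` are the antiderivatives of `ν` vanishing at `a` resp. `b`. -/
theorem phi_tilde_phi_star_connection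
    (c : ℝ) (hc0 : 0 < c) (hc1 : c < 1)
    (a b : ℝ)
    (ha : a = (1 - Real.sqrt (1 - c ^ 2)) / 2)
    (hb : b = (1 + Real.sqrt (1 - c ^ 2)) / 2)
    (μ : ℝ → ℝ)
    (hμab : ∀ x, a < x → x < b →
      μ x = (2 / (π * c)) * Real.arcsin (c / (2 * Real.sqrt (x - x ^ 2))))
    (hμout : ∀ x, (0 ≤ x ∧ x ≤ a) ∨ (b ≤ x ∧ x ≤ 1) → μ x = 1 / c)
    (g : ℂ → ℂ)
    (hg : ∀ z, g z = ∫ s in (0:ℝ)..1, (μ s : ℂ) * Complex.log (z - s))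
    (l : ℝ)
    (hl : l = 2 * ∫ s in (0:ℝ)..1, Real.log |a - s| * μ s)
    (φ : ℂ → ℂ)
    (hφ : ∀ z, φ z = (l:ℂ)/2 - g z)
    (ν : ℂ → ℂ)
    (hν : ∀ z, ν z =
      (2/(c:ℂ)) * Complex.log ((c:ℂ)/2 - (z - (a:ℂ)) ^ ((1:ℂ)/2) * (z - (b:ℂ)) ^ ((1:ℂ)/2))
        - (1/(c:ℂ)) * Complex.log (z - z ^ 2))
    (Dt Ds : Set ℂ)
    (hDt : Dt = {z : ℂ | ¬ (z.im = 0 ∧ (z.re ≤ 0 ∨ a ≤ z.re))})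
    (hDs : Ds = {z : ℂ | ¬ (z.im = 0 ∧ (z.re ≤ b ∨ 1 ≤ z.re))})
    (φt φs : ℂ → ℂ)
    (hφt : ∀ z ∈ Dt, HasDerivAt φt (ν z) z)
    (hφta : Tendsto φt (nhdsWithin (a:ℂ) Dt) (𝓝 0))
    (hφs : ∀ z ∈ Ds, HasDerivAt φs (ν z) z)
    (hφsb : Tendsto φs (nhdsWithin (b:ℂ) Ds) (𝓝 0)) :
    ∀ z : ℂ,
      (0 < z.im →
        φt z = φ z + (Real.pi : ℂ) * Complex.I * (1 - z/(c:ℂ)) ∧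
        φs z = φ z + ((Real.pi : ℂ) * Complex.I/(c:ℂ)) * (1 - z)) ∧
      (z.im < 0 →
        φt z = φ z - (Real.pi : ℂ) * Complex.I * (1 - z/(c:ℂ)) ∧
        φs z = φ z - ((Real.pi : ℂ) * Complex.I/(c:ℂ)) * (1 - z)) := by
  have hsq : √(1 - c ^ 2) ^ 2 = 1 - c ^ 2 := Real.sq_sqrt (by nlinarith)
  have hr0 : 0 < √(1 - c ^ 2) := Real.sqrt_pos.2 (by nlinarith)
  have hr1 : √(1 - c ^ 2) < 1 := by nlinarith
  have ha0 : 0 < a := by linarith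
  have hab : a < b := by linarith
  have hb1 : b < 1 := by linarith
  have hsum : b = 1 - a := by linarith
  have hprod : 4 * (a - a ^ 2) = c ^ 2 := by rw [ha]; linear_combination -hsq
  have hML : ∀ x, 0 < x → x ≤ a → M c x = 1 / c := fun x h0 h1 =>
    M_eq_out hc0 h0 (by linarith) (by nlinarith)
  have hMR : ∀ x, b ≤ x → x < 1 → M c x = 1 / c := fun x h0 h1 =>
    M_eq_out hc0 (by linarith) h1 (by nlinarith)
  -- The value of `μ` at the endpoints and outside `[0, 1]` does not affect any of the integrals.
  have hμM : ∀ x ∈ Ioo (0:ℝ) 1, μ x = M c x := by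
    intro x hx
    rcases le_or_gt x a with h | h
    · rw [hμout x (Or.inl ⟨hx.1.le, h⟩), hML x hx.1 h]
    rcases le_or_gt b x with h' | h'
    · rw [hμout x (Or.inr ⟨h', hx.2.le⟩), hMR x h' hx.2]
    · rw [hμab x h h', M]
  have hgG : ∀ z, g z = G c z := by
    intro z
    rw [hg, G, intervalIntegral.integral_of_le zero_le_one,
      intervalIntegral.integral_of_le zero_le_one, integral_Ioc_eq_integral_Ioo,
      integral_Ioc_eq_integral_Ioo]
    refine setIntegral_congr_fun measurableSet_Ioo fun x hx => ?_
    simp only [hμM x hx]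
  have hla : ∫ s in (0:ℝ)..1, Real.log |a - s| * M c s = l / 2 := by
    rw [hl, mul_div_cancel_left₀ _ two_ne_zero, intervalIntegral.integral_of_le zero_le_one,
      intervalIntegral.integral_of_le zero_le_one, integral_Ioc_eq_integral_Ioo,
      integral_Ioc_eq_integral_Ioo]
    refine setIntegral_congr_fun measurableSet_Ioo fun x hx => ?_
    simp only [hμM x hx]
  -- The reflection `s ↦ 1 - s` exchanges `a` and `b` and fixes the density.
  have hlb : ∫ s in (0:ℝ)..1, Real.log |b - s| * M c s = l / 2 := by
    rw [← hla]
    have := intervalIntegral.integral_comp_sub_left (a := 0) (b := 1)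
      (fun s => Real.log |b - s| * M c s) 1
    rw [sub_self, sub_zero] at this
    rw [← this]
    refine intervalIntegral.integral_congr fun s _ => ?_
    simp only [M_symm]
    rw [hsum, show 1 - a - (1 - s) = -(a - s) by ring, abs_neg]
  have hMa : ∫ s in a..1, M c s = 1 - a / c := by
    have h1 := intervalIntegral.integral_add_adjacent_intervals (M_ii hc0 0 a) (M_ii hc0 a 1)
    have h2 : ∫ s in (0:ℝ)..a, M c s = ∫ s in (0:ℝ)..a, 1 / c := by
      rw [intervalIntegral.integral_of_le ha0.le, intervalIntegral.integral_of_le ha0.le]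
      exact setIntegral_congr_fun measurableSet_Ioc fun x hx => hML x hx.1 hx.2
    rw [M_mass hc0 hc1, h2, intervalIntegral.integral_const, smul_eq_mul, sub_zero] at h1
    linear_combination h1
  have hMb : ∫ s in b..1, M c s = (1 - b) / c := by
    have h2 : ∫ s in b..1, M c s = ∫ s in b..1, 1 / c := by
      rw [intervalIntegral.integral_of_le hb1.le, intervalIntegral.integral_of_le hb1.le,
        integral_Ioc_eq_integral_Ioo, integral_Ioc_eq_integral_Ioo]
      exact setIntegral_congr_fun measurableSet_Ioo fun x hx => hMR x hx.1.le hx.2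
    rw [h2, intervalIntegral.integral_const, smul_eq_mul]; ring
  have hνR : ∀ z, ν z = nuR a b c z := hν
  have hDt' : ∀ z : ℂ, z.im ≠ 0 → z ∈ Dt := fun z hz => by rw [hDt]; exact fun h => hz h.1
  have hDs' : ∀ z : ℂ, z.im ≠ 0 → z ∈ Ds := fun z hz => by rw [hDs]; exact fun h => hz h.1
  have hup : ∀ (D : Set ℂ) (p : ℝ), (∀ z : ℂ, z.im ≠ 0 → z ∈ D) →
      Tendsto (fun y : ℝ => (p + y * I : ℂ)) (𝓝[>] 0) (𝓝[D] (p:ℂ)) := fun D p hD => by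
    have : Continuous fun y : ℝ => (p + y * I : ℂ) := by fun_prop
    refine tendsto_nhdsWithin_iff.2
      ⟨(this.tendsto' 0 _ (by simp)).mono_left nhdsWithin_le_nhds, ?_⟩
    filter_upwards [self_mem_nhdsWithin] with y hy
    exact hD _ (by simpa using (ne_of_gt hy))
  have hdn : ∀ (D : Set ℂ) (p : ℝ), (∀ z : ℂ, z.im ≠ 0 → z ∈ D) →
      Tendsto (fun y : ℝ => (p - y * I : ℂ)) (𝓝[>] 0) (𝓝[D] (p:ℂ)) := fun D p hD => by
    have : Continuous fun y : ℝ => (p - y * I : ℂ) := by fun_prop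
    refine tendsto_nhdsWithin_iff.2
      ⟨(this.tendsto' 0 _ (by simp)).mono_left nhdsWithin_le_nhds, ?_⟩
    filter_upwards [self_mem_nhdsWithin] with y hy
    exact hD _ (by simpa using (ne_of_gt hy))
  have hc : (c:ℂ) ≠ 0 := by exact_mod_cast hc0.ne'
  refine fun z => ⟨fun hz => ⟨?_, ?_⟩, fun hz => ⟨?_, ?_⟩⟩
  · rw [upper hc0 hc1 (fun w hw => by
      rw [← nuR_eq hc0 hc1 ha hb hw, ← hνR]; exact hφt w (hDt' w hw.ne')) ha0.le (hab.trans hb1).le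
      (hφta.comp (hup Dt a hDt')) hz, hla, hMa, hφ, hgG]
    push_cast; ring
  · rw [upper hc0 hc1 (fun w hw => by
      rw [← nuR_eq hc0 hc1 ha hb hw, ← hνR]; exact hφs w (hDs' w hw.ne')) (ha0.trans hab).le hb1.le
      (hφsb.comp (hup Ds b hDs')) hz, hlb, hMb, hφ, hgG]
    push_cast; ring
  · rw [lower hc0 hc1 ha hb (fun w hw => by
      rw [← hνR]; exact hφt w (hDt' w hw.ne)) ha0.le (hab.trans hb1).le
      (hφta.comp (hdn Dt a hDt')) hz, hla, hMa, hφ, hgG]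
    push_cast; ring
  · rw [lower hc0 hc1 ha hb (fun w hw => by
      rw [← hνR]; exact hφs w (hDs' w hw.ne)) (ha0.trans hab).le hb1.le
      (hφsb.comp (hdn Ds b hDs')) hz, hlb, hMb, hφ, hgG]
    push_cast; ring
end
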